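/- For every probability measure μ on 𝕋^d and every sequence of probability measures μ_n on Ξ_n converging weakly to μ, liminf_{n→∞} n·ℐ_n(μ_n) ≥ J⁰(μ). -/

import Mathlib

/-!
The proof combines a variational lower bound for `ℐ_n` with an explicit family of test functions.

For every periodic `ψ`, inserting `u = exp(n(F - ψ)/2)` in the Donsker–Varadhan formula gives
`n ℐ_n(m) ≥ ∑ₓ m(x) (E_n F(x) - E_n ψ(x))`, where
`E_n G(x) = n ∑ᵢ ∑_± exp(-n (G(x ± eᵢ/n) - G(x))/2)` (`IT_lower`). For `G` of class `C²`, Taylor's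
formula yields, uniformly on the torus, `E_n G = n · leadE G - corrE G + o(1)` with
`leadE G = ∑ᵢ 2 cosh(∂ᵢG/2)` and `corrE G = ½ ∑ᵢ ∂ᵢ²G cosh(∂ᵢG/2)` (`exit_expand`). Hence, if
`leadE ψ ≤ leadE F` everywhere, the liminf is at least
`M ∫ (leadE F - leadE ψ) dμ + ∫ (corrE ψ - corrE F) dμ` for every `M` (`liminf_lower`). If the first
inequality is strict off the critical points, letting `M → ∞` gives an infinite liminf unless `μ` is
carried by the critical points, and then the second integral remains (`main_of_test`).

At a critical point `z` with Hessian `H`, `corrE ψ - corrE F` is `½ (Δψ - tr H)` when `∇ψ(z) = 0`,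
whereas `ζ(z) = ½ (tr |H| - tr H)`. So `ψ` should behave like `½ (1 - δ) ⟨|H|(x - z), x - z⟩` near
each `z`: the constraint on the leading terms holds near `z` since
`|(1 - δ)|H|y|² ≤ (1 - δ)|Hy|²` and `H` is nonsingular (`cosh_compare`). Composing a periodic
version of this quadratic form with a truncation `capT`, constant away from zero and with slope in
`[0, 1]`, localizes `ψ` near `z` without increasing its gradient (`exists_bump`). As there are
finitely many critical points, the localized functions can be given disjoint gradient supports and
summed (`exists_test`).
-/

open Filter MeasureTheory
open scoped ENNReal Classical

noncomputable section

/-- Discretization of the torus `𝕋^d = ℝ^d/ℤ^d`: the points `k/n`, `k ∈ {0,…,n-1}^d`,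
taken as representatives in the fundamental domain `[0,1)^d`. -/
def XiT (d n : ℕ) : Finset (Fin d → ℝ) :=
  (Finset.univ : Finset (Fin d → Fin n)).image fun k i => (k i : ℝ) / n

/-- `x` and `y` are nearest neighbours of the discretized torus: `y - x ≡ ±eᵢ/n mod ℤ^d`. -/
def NbrT (d n : ℕ) (x y : Fin d → ℝ) : Prop :=
  ∃ i : Fin d, ∃ s : ℝ, (s = 1 ∨ s = -1) ∧ ∃ v : Fin d → ℤ,
    ∀ j, y j = x j + (if j = i then s / n else 0) + (v j : ℝ)

/-- Partition function `Z_{F,n}`. -/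
def ZT (d : ℕ) (F : (Fin d → ℝ) → ℝ) (n : ℕ) : ℝ :=
  ∑ x ∈ XiT d n, Real.exp (-(n : ℝ) * F x)

/-- Stationary measure `π_n(x) = e^{-nF(x)}/Z_{F,n}`. -/
def piT (d : ℕ) (F : (Fin d → ℝ) → ℝ) (n : ℕ) (x : Fin d → ℝ) : ℝ :=
  Real.exp (-(n : ℝ) * F x) / ZT d F n

/-- Jump rates `R_n(x,y) = e^{-(n/2)(F(y)-F(x))}` for nearest neighbours, `0` otherwise. -/
def RT (d : ℕ) (F : (Fin d → ℝ) → ℝ) (n : ℕ) (x y : Fin d → ℝ) : ℝ :=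
  if NbrT d n x y then Real.exp (-((n : ℝ) / 2) * (F y - F x)) else 0

/-- Level-two large deviations rate functional `ℐ_n`. -/
def IT (d : ℕ) (F : (Fin d → ℝ) → ℝ) (n : ℕ) (μ : (Fin d → ℝ) → ℝ) : ℝ :=
  (1 / 2) * ∑ x ∈ XiT d n, ∑ y ∈ (XiT d n).erase x,
    piT d F n x * RT d F n x y *
      (Real.sqrt (μ y / piT d F n y) - Real.sqrt (μ x / piT d F n x)) ^ 2

/-- The function `G(x) = Σᵢ 2(cosh(∂ᵢF(x)/2) - 1)`. -/
def GT (d : ℕ) (F : (Fin d → ℝ) → ℝ) (x : Fin d → ℝ) : ℝ :=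
  ∑ i : Fin d, 2 * (Real.cosh (fderiv ℝ F x (Pi.single i 1) / 2) - 1)

/-- A function on `ℝ^d` is `ℤ^d`-periodic, i.e. well defined on the torus. -/
def PerT (d : ℕ) (g : (Fin d → ℝ) → ℝ) : Prop :=
  ∀ (x : Fin d → ℝ) (v : Fin d → ℤ), g (fun i => x i + (v i : ℝ)) = g x

/-- The (Euclidean) torus distance. -/
def tdistT (d : ℕ) (x y : Fin d → ℝ) : ℝ :=
  ⨅ v : Fin d → ℤ, Real.sqrt (∑ i, (x i - y i - (v i : ℝ)) ^ 2)

/-- Membership in the (torus) cube of side `ε` centered at `z`. -/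
def InCubeT (d : ℕ) (ε : ℝ) (z x : Fin d → ℝ) : Prop :=
  ∃ v : Fin d → ℤ, ∀ i, |x i - z i - (v i : ℝ)| ≤ ε / 2

/-- The discretized cube `Q^n_ε(z) = Q_ε(z) ∩ Ξ_n`. -/
def QT (d : ℕ) (ε : ℝ) (z : Fin d → ℝ) (n : ℕ) : Finset (Fin d → ℝ) :=
  (XiT d n).filter (InCubeT d ε z)

/-- The Hessian matrix of `F` at `x`. -/
def HessT (d : ℕ) (F : (Fin d → ℝ) → ℝ) (x : Fin d → ℝ) : Matrix (Fin d) (Fin d) ℝ :=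
  Matrix.of fun i j => fderiv ℝ (fun y => fderiv ℝ F y (Pi.single j 1)) x (Pi.single i 1)

/-! ### Periodic functions and the expansion of exit rates -/

/-- The partial derivative `∂ᵢG`. -/
def pd {d : ℕ} (G : (Fin d → ℝ) → ℝ) (i : Fin d) (x : Fin d → ℝ) : ℝ :=
  fderiv ℝ G x (Pi.single i 1)

/-- The pure second partial derivative `∂ᵢ²G`. -/
def pdd {d : ℕ} (G : (Fin d → ℝ) → ℝ) (i : Fin d) (x : Fin d → ℝ) : ℝ :=
  fderiv ℝ (fun y => fderiv ℝ G y (Pi.single i 1)) x (Pi.single i 1)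

/-- A periodic function is determined by its values on `[0,1)^d`. -/
lemma PerT.eq_fract {d : ℕ} {g : (Fin d → ℝ) → ℝ} (hg : PerT d g) (x : Fin d → ℝ) :
    g x = g (fun i => Int.fract (x i)) := by
  rw [← hg (fun i => Int.fract (x i)) (fun i => ⌊x i⌋)]
  congr 1
  funext i
  exact (Int.fract_add_floor (x i)).symm

lemma PerT.fderiv {d : ℕ} {g : (Fin d → ℝ) → ℝ} (hg : PerT d g) (x : Fin d → ℝ)
    (v : Fin d → ℤ) : fderiv ℝ g (fun i => x i + (v i : ℝ)) = fderiv ℝ g x := by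
  have h1 : (fun y : Fin d → ℝ => g (y + fun j => (v j : ℝ))) = g := by
    funext y
    exact hg y v
  have h2 := fderiv_comp_add_right (𝕜 := ℝ) (f := g) (x := x) (fun j => (v j : ℝ))
  rw [h1] at h2
  exact h2.symm

lemma PerT.pd {d : ℕ} {g : (Fin d → ℝ) → ℝ} (hg : PerT d g) (i : Fin d) : PerT d (pd g i) := by
  intro x v
  simp only [_root_.pd, hg.fderiv x v]

lemma PerT.pdd {d : ℕ} {g : (Fin d → ℝ) → ℝ} (hg : PerT d g) (i : Fin d) :
    PerT d (pdd g i) :=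
  (hg.pd i).pd i

lemma contDiff_pd {d : ℕ} {g : (Fin d → ℝ) → ℝ} (hg : ContDiff ℝ 2 g) (i : Fin d) :
    ContDiff ℝ 1 (pd g i) := by
  have h1 : ContDiff ℝ 1 (fderiv ℝ g) := hg.fderiv_right (by norm_num)
  exact h1.clm_apply contDiff_const

lemma continuous_pd {d : ℕ} {g : (Fin d → ℝ) → ℝ} (hg : ContDiff ℝ 2 g) (i : Fin d) :
    Continuous (pd g i) := (contDiff_pd hg i).continuous

lemma continuous_pdd {d : ℕ} {g : (Fin d → ℝ) → ℝ} (hg : ContDiff ℝ 2 g) (i : Fin d) :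
    Continuous (pdd g i) :=
  ((contDiff_pd hg i).continuous_fderiv (by norm_num)).clm_apply continuous_const

/-- Every point is equivalent modulo `ℤ^d` to one of the compact cube `[0,1]^d`. -/
lemma per_mem_box {d : ℕ} (x : Fin d → ℝ) :
    (fun i => Int.fract (x i)) ∈ Set.Icc (0 : Fin d → ℝ) 1 :=
  ⟨fun _ => Int.fract_nonneg _, fun _ => (Int.fract_lt_one _).le⟩

lemma per_bounded {d : ℕ} {g : (Fin d → ℝ) → ℝ} (hg : PerT d g) (hc : Continuous g) :
    ∃ C, 0 ≤ C ∧ ∀ x, |g x| ≤ C := by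
  obtain ⟨C, hC⟩ := (isCompact_Icc (a := (0 : Fin d → ℝ)) (b := 1)).exists_bound_of_continuousOn
    hc.continuousOn
  refine ⟨max C 0, le_max_right _ _, fun x => ?_⟩
  rw [hg.eq_fract x]
  exact (hC _ (per_mem_box x)).trans (le_max_left _ _)

lemma per_unif {d : ℕ} {g : (Fin d → ℝ) → ℝ} (hg : PerT d g) (hc : Continuous g)
    {ε : ℝ} (hε : 0 < ε) : ∃ δ > 0, ∀ x y, dist x y < δ → |g y - g x| < ε := by
  have h := (isCompact_Icc (a := (0 : Fin d → ℝ)) (b := 1)).uniformContinuousAt_of_continuousAt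
    g (fun a _ => hc.continuousAt) (Metric.dist_mem_uniformity hε)
  obtain ⟨δ, hδ, h⟩ := Metric.mem_uniformity_dist.1 h
  refine ⟨δ, hδ, fun x y hxy => ?_⟩
  have h1 := hg y (fun i => -⌊x i⌋)
  rw [← h1, hg.eq_fract x, abs_sub_comm]
  refine h (a := fun i => Int.fract (x i)) (b := fun i => y i + ((-⌊x i⌋ : ℤ) : ℝ)) ?_ (per_mem_box x)
  refine lt_of_eq_of_lt ?_ hxy
  rw [dist_eq_norm, dist_eq_norm]
  congr 1
  funext i
  simp only [Pi.sub_apply, Int.fract]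
  push_cast
  ring

/-- Taylor's formula with Lagrange remainder, for `g` merely twice differentiable. -/
lemma taylor_two {g g' g'' : ℝ → ℝ} {h : ℝ} (hh : 0 < h) (h1 : ∀ t, HasDerivAt g (g' t) t)
    (h2 : ∀ t, HasDerivAt g' (g'' t) t) :
    ∃ η ∈ Set.Ioo 0 h, g h = g 0 + g' 0 * h + g'' η / 2 * h ^ 2 := by
  have hF : ∀ t, HasDerivAt (fun t => g t - g' 0 * t) (g' t - g' 0) t := fun t => by
    have := (h1 t).sub ((hasDerivAt_id t).const_mul (g' 0))
    rw [mul_one] at this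
    exact this
  obtain ⟨c, hc, hc'⟩ := exists_ratio_hasDerivAt_eq_ratio_slope (fun t => g t - g' 0 * t)
    (fun t => g' t - g' 0) hh (fun t _ => (hF t).continuousAt.continuousWithinAt)
    (fun t _ => hF t) (fun t => t ^ 2) (fun t => 2 * t) (by fun_prop)
    (fun t _ => by simpa using hasDerivAt_pow 2 t)
  obtain ⟨η, hη, hη'⟩ := exists_hasDerivAt_eq_slope g' g'' hc.1
    (fun t _ => (h2 t).continuousAt.continuousWithinAt) (fun t _ => h2 t)
  refine ⟨η, ⟨hη.1, hη.2.trans hc.2⟩, ?_⟩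
  have hc0 : c ≠ 0 := hc.1.ne'
  rw [eq_div_iff (by simpa using hc0)] at hη'
  have : c * (g h - g 0 - g' 0 * h - g'' η / 2 * h ^ 2) = 0 := by
    simp only [mul_zero, sub_zero] at hc' hη'
    rw [← hη'] at hc'
    linear_combination - (1/2) * hc'
  have := (mul_eq_zero.1 this).resolve_left hc0
  linarith

/-- The point `x + s eᵢ / n`. -/
def shiftT {d : ℕ} (n : ℕ) (x : Fin d → ℝ) (i : Fin d) (s : ℝ) : Fin d → ℝ :=
  x + Pi.single i (s / n)

lemma taylor_shift {d : ℕ} {G : (Fin d → ℝ) → ℝ} (hG : ContDiff ℝ 2 G) {n : ℕ} (hn : 0 < n)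
    (x : Fin d → ℝ) (i : Fin d) {s : ℝ} (hs : s = 1 ∨ s = -1) :
    ∃ y, dist x y ≤ 1 / n ∧
      (n : ℝ) * (G (shiftT n x i s) - G x) = s * pd G i x + pdd G i y / (2 * n) := by
  have hline : ∀ t : ℝ, HasDerivAt (fun t : ℝ => x + t • (Pi.single i s : Fin d → ℝ))
      (Pi.single i s) t := fun t => by
    simpa using ((hasDerivAt_id t).smul_const (Pi.single i s : Fin d → ℝ)).const_add x
  have hsing : (Pi.single i s : Fin d → ℝ) = s • Pi.single i 1 := by
    rw [← Pi.single_smul]; simp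
  have hd : Differentiable ℝ G := hG.differentiable (by norm_num)
  have hd' : Differentiable ℝ (pd G i) := (contDiff_pd hG i).differentiable (by norm_num)
  have h1 : ∀ t : ℝ, HasDerivAt (fun t : ℝ => G (x + t • (Pi.single i s : Fin d → ℝ)))
      (s * pd G i (x + t • (Pi.single i s : Fin d → ℝ))) t := fun t => by
    have := (hd (x + t • (Pi.single i s : Fin d → ℝ))).hasFDerivAt.comp_hasDerivAt t (hline t)
    have e : fderiv ℝ G (x + t • (Pi.single i s : Fin d → ℝ)) (Pi.single i s)
        = s * pd G i (x + t • (Pi.single i s : Fin d → ℝ)) := by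
      conv_lhs => arg 2; rw [hsing]
      rw [map_smul]
      rfl
    rw [e] at this
    exact this
  have h2 : ∀ t : ℝ, HasDerivAt (fun t : ℝ => s * pd G i (x + t • (Pi.single i s : Fin d → ℝ)))
      (pdd G i (x + t • (Pi.single i s : Fin d → ℝ))) t := fun t => by
    have := ((hd' (x + t • (Pi.single i s : Fin d → ℝ))).hasFDerivAt.comp_hasDerivAt t
      (hline t)).const_mul s
    have hss : s * s = 1 := by rcases hs with rfl | rfl <;> norm_num
    have e : s * fderiv ℝ (pd G i) (x + t • (Pi.single i s : Fin d → ℝ)) (Pi.single i s)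
        = pdd G i (x + t • (Pi.single i s : Fin d → ℝ)) := by
      conv_lhs => arg 2; arg 2; rw [hsing]
      rw [map_smul, smul_eq_mul, ← mul_assoc, hss, one_mul]
      rfl
    rw [e] at this
    exact this
  have hn' : (0 : ℝ) < n := by exact_mod_cast hn
  obtain ⟨η, hη, h⟩ := taylor_two (h := 1 / (n : ℝ)) (by positivity) h1 h2
  refine ⟨x + η • (Pi.single i s : Fin d → ℝ), ?_, ?_⟩
  · rw [dist_eq_norm, sub_add_cancel_left, norm_neg, norm_smul]
    have : ‖(Pi.single i s : Fin d → ℝ)‖ = 1 := by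
      rw [Pi.norm_single]
      rcases hs with rfl | rfl <;> norm_num
    rw [this, mul_one, Real.norm_of_nonneg hη.1.le]
    exact hη.2.le
  · have e : x + (1 / (n : ℝ)) • (Pi.single i s : Fin d → ℝ) = shiftT n x i s := by
      unfold shiftT
      rw [← Pi.single_smul]
      congr 2
      simp [div_eq_inv_mul]
    simp only [zero_smul, add_zero] at h
    rw [e] at h
    rw [h]
    field_simp
    ring

/-- First-order expansion of `exp(-(a + b'/(2n))/2)` in `1/n`, where the coefficient `b'` is only
known to be close to `b`. -/
lemma exp_expand {a b b' C ε : ℝ} {n : ℕ} (hn : 0 < n) (hC : 1 ≤ C) (hb' : |b'| ≤ C)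
    (hbb : |b' - b| ≤ ε) (hnC : C ≤ n) :
    |n * (Real.exp (-(a + b' / (2 * n)) / 2) - Real.exp (-a / 2)) + b / 4 * Real.exp (-a / 2)|
      ≤ Real.exp (-a / 2) * (C ^ 2 / n + ε) := by
  have hn' : (0 : ℝ) < n := by exact_mod_cast hn
  set u : ℝ := -(b' / (4 * n)) with hu
  have hun : n * u = - b' / 4 := by rw [hu]; field_simp
  have habs : |u| ≤ C / n := by
    rw [hu, abs_neg, abs_div, abs_of_pos (by positivity : (0 : ℝ) < 4 * n),
      div_le_div_iff₀ (by positivity) hn']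
    nlinarith
  have hu1 : |u| ≤ 1 := habs.trans ((div_le_one hn').2 hnC)
  have hexp := Real.abs_exp_sub_one_sub_id_le hu1
  have hsq : u ^ 2 ≤ (C / n) ^ 2 := by
    rw [← sq_abs]; gcongr
  have e1 : Real.exp (-(a + b' / (2 * n)) / 2) = Real.exp (-a / 2) * Real.exp u := by
    rw [← Real.exp_add, hu]; congr 1; field_simp; ring
  have e2 : n * (Real.exp (-(a + b' / (2 * n)) / 2) - Real.exp (-a / 2))
      + b / 4 * Real.exp (-a / 2)
      = Real.exp (-a / 2) * (n * (Real.exp u - 1 - u) + (b - b') / 4) := by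
    rw [e1]; linear_combination (-Real.exp (-a / 2)) * (-hun)
  rw [e2, abs_mul, abs_of_pos (Real.exp_pos _)]
  gcongr
  refine (abs_add_le _ _).trans (add_le_add ?_ ?_)
  · rw [abs_mul, abs_of_pos hn']
    calc n * |Real.exp u - 1 - u| ≤ n * (C / n) ^ 2 := by gcongr; exact hexp.trans hsq
      _ = C ^ 2 / n := by field_simp
  · rw [abs_div, abs_sub_comm b b', abs_of_pos (by norm_num : (0 : ℝ) < 4)]
    have := abs_nonneg (b' - b)
    linarith

/-- The exponential of the rescaled increment of `G` over the edge in direction `s eᵢ`. -/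
def edgeE {d : ℕ} (G : (Fin d → ℝ) → ℝ) (n : ℕ) (x : Fin d → ℝ) (i : Fin d) (s : ℝ) : ℝ :=
  Real.exp (-((n : ℝ) / 2) * (G (shiftT n x i s) - G x))

/-- Expansion of the rate along one edge, uniformly on the torus. The error is only `o(1)`, as the
second derivative of `G` is merely uniformly continuous. -/
lemma edge_expand {d : ℕ} {G : (Fin d → ℝ) → ℝ} (hG : ContDiff ℝ 2 G) (hper : PerT d G)
    (i : Fin d) {s : ℝ} (hs : s = 1 ∨ s = -1) {ε : ℝ} (hε : 0 < ε) :
    ∀ᶠ n : ℕ in atTop, ∀ x,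
      |n * (edgeE G n x i s - Real.exp (-(s * pd G i x) / 2))
        + pdd G i x / 4 * Real.exp (-(s * pd G i x) / 2)| ≤ ε := by
  obtain ⟨A, hA0, hA⟩ := per_bounded (hper.pd i) (continuous_pd hG i)
  obtain ⟨B, hB0, hB⟩ := per_bounded (hper.pdd i) (continuous_pdd hG i)
  set C := B + 1 with hC
  set D := Real.exp (A / 2) with hD
  have hD0 : 0 < D := Real.exp_pos _
  obtain ⟨δ, hδ, hU⟩ := per_unif (hper.pdd i) (continuous_pdd hG i)
    (show 0 < ε / (2 * D) by positivity)
  have t1 : Tendsto (fun n : ℕ => 1 / (n : ℝ)) atTop (nhds 0) :=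
    tendsto_one_div_atTop_nhds_zero_nat
  have t2 : Tendsto (fun n : ℕ => C ^ 2 / (n : ℝ)) atTop (nhds 0) :=
    tendsto_const_div_atTop_nhds_zero_nat _
  filter_upwards [eventually_gt_atTop 0, t1.eventually_lt_const hδ,
    t2.eventually_lt_const (show 0 < ε / (2 * D) by positivity),
    tendsto_natCast_atTop_atTop.eventually_ge_atTop C] with n hn h1 h2 h3 x
  obtain ⟨y, hy, hxy⟩ := taylor_shift hG hn x i hs
  have e : edgeE G n x i s
      = Real.exp (-(s * pd G i x + pdd G i y / (2 * n)) / 2) := by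
    rw [← hxy, edgeE]; congr 1; ring
  rw [e]
  refine (exp_expand (a := s * pd G i x) (b := pdd G i x) hn (C := C) (by linarith)
    ((hB y).trans (by linarith)) (hU x y (hy.trans_lt h1)).le h3).trans ?_
  have hexp : Real.exp (-(s * pd G i x) / 2) ≤ D := by
    rw [hD]
    apply Real.exp_le_exp.2
    have : |s * pd G i x| ≤ A := by
      rcases hs with rfl | rfl <;> simpa using hA x
    have := (abs_le.1 this).1
    linarith
  calc _ ≤ D * (ε / (2 * D) + ε / (2 * D)) := by gcongr
    _ = ε := by field_simp; ring

/-- The rescaled total exit rate `n ∑ᵢ ∑_± exp(-n(G(x ± eᵢ/n) - G(x))/2)`. -/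
def exitE {d : ℕ} (G : (Fin d → ℝ) → ℝ) (n : ℕ) (x : Fin d → ℝ) : ℝ :=
  n * ∑ i : Fin d, (edgeE G n x i 1 + edgeE G n x i (-1))

/-- The leading coefficient `∑ᵢ 2 cosh(∂ᵢG/2)` in the expansion of `exitE`. -/
def leadE {d : ℕ} (G : (Fin d → ℝ) → ℝ) (x : Fin d → ℝ) : ℝ :=
  ∑ i : Fin d, 2 * Real.cosh (pd G i x / 2)

/-- The second coefficient `½ ∑ᵢ ∂ᵢ²G cosh(∂ᵢG/2)` in the expansion of `exitE`. -/
def corrE {d : ℕ} (G : (Fin d → ℝ) → ℝ) (x : Fin d → ℝ) : ℝ :=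
  ∑ i : Fin d, pdd G i x / 2 * Real.cosh (pd G i x / 2)

/-- Uniform expansion `n · leadE - corrE + o(1)` of the exit rate on the torus. -/
lemma exit_expand {d : ℕ} {G : (Fin d → ℝ) → ℝ} (hG : ContDiff ℝ 2 G) (hper : PerT d G)
    {ε : ℝ} (hε : 0 < ε) :
    ∀ᶠ n : ℕ in atTop, ∀ x, |exitE G n x - (n * leadE G x - corrE G x)| ≤ ε := by
  set ε' := ε / (2 * (d + 1)) with hε'
  have hpos : 0 < ε' := by positivity
  filter_upwards [eventually_all.2 fun i => edge_expand hG hper i (Or.inl rfl) hpos,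
    eventually_all.2 fun i => edge_expand hG hper i (Or.inr rfl) hpos] with n h1 h2 x
  have e : exitE G n x - (n * leadE G x - corrE G x) = ∑ i : Fin d,
      ((n * (edgeE G n x i 1 - Real.exp (-(1 * pd G i x) / 2))
        + pdd G i x / 4 * Real.exp (-(1 * pd G i x) / 2)) +
       (n * (edgeE G n x i (-1) - Real.exp (-(-1 * pd G i x) / 2))
        + pdd G i x / 4 * Real.exp (-(-1 * pd G i x) / 2))) := by
    unfold exitE leadE corrE
    rw [Finset.mul_sum, Finset.mul_sum, ← Finset.sum_sub_distrib, ← Finset.sum_sub_distrib]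
    refine Finset.sum_congr rfl fun i _ => ?_
    have r1 : -(1 * pd G i x) / 2 = -(pd G i x / 2) := by ring
    have r2 : -(-1 * pd G i x) / 2 = pd G i x / 2 := by ring
    rw [Real.cosh_eq, r1, r2]
    ring
  rw [e]
  calc _ ≤ ∑ i : Fin d, (ε' + ε') := by
        refine (Finset.abs_sum_le_sum_abs _ _).trans (Finset.sum_le_sum fun i _ => ?_)
        exact (abs_add_le _ _).trans (add_le_add (h1 i x) (h2 i x))
    _ = d * (2 * ε') := by simp; ring
    _ ≤ ε := by
        rw [hε', ← mul_div_assoc, ← mul_div_assoc, div_le_iff₀ (by positivity)]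
        nlinarith

/-! ### The variational lower bound on the discrete torus -/

lemma mem_XiT {d n : ℕ} (hn : 0 < n) {x : Fin d → ℝ} :
    x ∈ XiT d n ↔ ∀ i, Int.fract (x i) = x i ∧ ∃ m : ℤ, x i * n = m := by
  have hn' : (0 : ℝ) < n := by exact_mod_cast hn
  simp only [XiT, Finset.mem_image, Finset.mem_univ, true_and]
  constructor
  · rintro ⟨k, rfl⟩ i
    refine ⟨Int.fract_eq_self.2 ⟨by positivity, ?_⟩, (k i : ℕ), ?_⟩
    · rw [div_lt_one hn']
      exact_mod_cast (k i).2
    · field_simp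
      push_cast
      rfl
  · intro h
    have h' : ∀ i, ∃ k : Fin n, (k : ℝ) / n = x i := fun i => by
      obtain ⟨h1, m, hm⟩ := h i
      obtain ⟨h2, h3⟩ := Int.fract_eq_self.1 h1
      have hm0 : 0 ≤ m := by
        have : (0 : ℝ) ≤ m := by rw [← hm]; positivity
        exact_mod_cast this
      have hmn : m < n := by
        have : (m : ℝ) < n := by rw [← hm]; nlinarith
        exact_mod_cast this
      refine ⟨⟨m.toNat, by omega⟩, ?_⟩
      rw [div_eq_iff hn'.ne', hm]
      have : ((m.toNat : ℤ) : ℝ) = (m : ℝ) := by rw [Int.toNat_of_nonneg hm0]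
      exact_mod_cast this
    choose k hk using h'
    exact ⟨k, funext hk⟩

/-- The sign `±1` encoded by a Boolean. -/
def sgnB (b : Bool) : ℝ := if b then 1 else -1

lemma sgnB_eq (b : Bool) : sgnB b = 1 ∨ sgnB b = -1 := by
  cases b <;> simp [sgnB]

lemma sgnB_int (b : Bool) : ∃ m : ℤ, sgnB b = m ∧ |m| = 1 := by
  cases b
  · exact ⟨-1, by simp [sgnB], by simp⟩
  · exact ⟨1, by simp [sgnB], by simp⟩

/-- The representative in `[0,1)^d` of the neighbour `x ± eᵢ/n`. -/
def nbT {d : ℕ} (n : ℕ) (x : Fin d → ℝ) (p : Fin d × Bool) : Fin d → ℝ :=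
  fun j => Int.fract (shiftT n x p.1 (sgnB p.2) j)

lemma shiftT_apply {d : ℕ} (n : ℕ) (x : Fin d → ℝ) (i : Fin d) (s : ℝ) (j : Fin d) :
    shiftT n x i s j = x j + (if j = i then s / n else 0) := by
  simp [shiftT, Pi.single_apply]

/-- For `n ≥ 3` the `2d` neighbours of a point of the discrete torus are distinct, so that the
sum of a periodic function over the neighbours is the sum over the `2d` directions. -/
lemma sum_nbr {d n : ℕ} (hn : 3 ≤ n) {x : Fin d → ℝ} (hx : x ∈ XiT d n)
    {f : (Fin d → ℝ) → ℝ} (hf : PerT d f) :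
    ∑ y ∈ (XiT d n).erase x, (if NbrT d n x y then f y else 0)
      = ∑ i : Fin d, (f (shiftT n x i 1) + f (shiftT n x i (-1))) := by
  have hn0 : 0 < n := by omega
  have hn' : (0 : ℝ) < n := by exact_mod_cast hn0
  have hR : ∑ i : Fin d, (f (shiftT n x i 1) + f (shiftT n x i (-1)))
      = ∑ p : Fin d × Bool, f (shiftT n x p.1 (sgnB p.2)) := by
    rw [Fintype.sum_prod_type]
    refine Finset.sum_congr rfl fun i _ => ?_
    simp [sgnB]
  rw [hR, ← Finset.sum_filter]
  symm
  have hmem := (mem_XiT hn0).1 hx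
  refine Finset.sum_bij (fun p _ => nbT n x p) ?_ ?_ ?_ ?_
  · rintro ⟨i, b⟩ -
    obtain ⟨m, hm, hm1⟩ := sgnB_int b
    rw [Finset.mem_filter, Finset.mem_erase]
    refine ⟨⟨?_, ?_⟩, ?_⟩
    · intro h
      have h1 := congrFun h i
      simp only [nbT, shiftT_apply, if_true, Int.fract] at h1
      have h2 : (m : ℝ) = n * ⌊x i + sgnB b / n⌋ := by
        rw [← hm]
        generalize (⌊x i + sgnB b / n⌋ : ℝ) = w at h1 ⊢
        field_simp at h1
        linear_combination h1
      have h3 : m = n * ⌊x i + sgnB b / n⌋ := by exact_mod_cast h2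
      have h4 : (n : ℤ) ∣ m := ⟨_, h3⟩
      have h5 := Int.le_of_dvd (by rw [hm1]; norm_num) ((dvd_abs _ _).2 h4)
      rw [hm1] at h5
      omega
    · refine (mem_XiT hn0).2 fun j => ⟨Int.fract_fract _, ?_⟩
      obtain ⟨-, k, hk⟩ := hmem j
      refine ⟨k + (if j = i then m else 0) - ⌊shiftT n x i (sgnB b) j⌋ * n, ?_⟩
      simp only [nbT, Int.fract]
      push_cast
      rw [sub_mul, shiftT_apply, add_mul, hk, hm]
      split_ifs
      · field_simp
      · simp
    · refine ⟨i, sgnB b, sgnB_eq b, fun j => -⌊shiftT n x i (sgnB b) j⌋, fun j => ?_⟩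
      simp only [nbT, Int.fract]
      conv_lhs => arg 1; rw [shiftT_apply]
      push_cast
      ring
  · rintro ⟨i, b⟩ - ⟨i', b'⟩ - h
    obtain ⟨m, hm, hm1⟩ := sgnB_int b
    obtain ⟨m', hm', hm1'⟩ := sgnB_int b'
    have key : ∀ j, (if j = i then m else 0) = (if j = i' then m' else 0) := fun j => by
      have h1 := congrFun h j
      simp only [nbT] at h1
      obtain ⟨z, hz⟩ := Int.fract_eq_fract.1 h1
      rw [shiftT_apply, shiftT_apply, hm, hm'] at hz
      have h2 : (((if j = i then m else 0) - (if j = i' then m' else 0) : ℤ) : ℝ) = n * z := by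
        rw [← hz]
        push_cast
        split_ifs <;> field_simp <;> ring
      have h3 : (if j = i then m else 0) - (if j = i' then m' else 0) = n * z := by
        exact_mod_cast h2
      have h4 : (n : ℤ) ∣ (if j = i then m else 0) - (if j = i' then m' else 0) := ⟨z, h3⟩
      have h5 : |(if j = i then m else 0) - (if j = i' then m' else 0)| < (n : ℤ) := by
        have a1 := abs_le.1 hm1.le
        have a2 := abs_le.1 hm1'.le
        rw [abs_lt]
        split_ifs <;> omega
      have := Int.eq_zero_of_abs_lt_dvd h4 h5
      omega
    have k1 := key i
    rw [if_pos rfl] at k1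
    have hm0 : m ≠ 0 := by rintro rfl; simp at hm1
    by_cases hii : i = i'
    · rw [if_pos hii] at k1
      have : sgnB b = sgnB b' := by rw [hm, hm', k1]
      have hb : b = b' := by
        cases b <;> cases b' <;> simp [sgnB] at this ⊢ <;> norm_num at this
      rw [hii, hb]
    · rw [if_neg hii] at k1
      exact absurd k1 hm0
  · intro y hy
    rw [Finset.mem_filter, Finset.mem_erase] at hy
    obtain ⟨⟨-, hyX⟩, i, s, hs, v, hv⟩ := hy
    obtain ⟨b, rfl⟩ : ∃ b, s = sgnB b := by
      rcases hs with rfl | rfl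
      · exact ⟨true, by simp [sgnB]⟩
      · exact ⟨false, by simp [sgnB]⟩
    refine ⟨(i, b), Finset.mem_univ _, ?_⟩
    funext j
    rw [← ((mem_XiT hn0).1 hyX j).1, hv j]
    simp only [nbT, shiftT_apply, Int.fract_add_intCast]
  · rintro p -
    rw [hf.eq_fract]
    rfl

lemma NbrT.symm {d n : ℕ} {x y : Fin d → ℝ} (h : NbrT d n x y) : NbrT d n y x := by
  obtain ⟨i, s, hs, v, hv⟩ := h
  refine ⟨i, -s, ?_, fun j => -v j, fun j => ?_⟩
  · rcases hs with rfl | rfl <;> norm_num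
  · rw [hv j]
    split_ifs <;> push_cast <;> ring

/-- The contribution of the edge `{x, y}` to the variational bound. With `√m(x) = p`, `√m(y) = q`,
both sides contain the same diagonal terms, and what remains is
`2pq ≤ p² t² + q² t⁻²` with `t² = exp(-n(ψ(y) - ψ(x))/2)`. -/
lemma edge_bound {d : ℕ} (F ψ : (Fin d → ℝ) → ℝ) {n : ℕ} {m : (Fin d → ℝ) → ℝ}
    {x y : Fin d → ℝ} (hx : 0 ≤ m x) (hy : 0 ≤ m y) (hZ : 0 < ZT d F n) :
    m x * (Real.exp (-((n : ℝ) / 2) * (F y - F x)) - Real.exp (-((n : ℝ) / 2) * (ψ y - ψ x)))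
    + m y * (Real.exp (-((n : ℝ) / 2) * (F x - F y)) - Real.exp (-((n : ℝ) / 2) * (ψ x - ψ y)))
    ≤ piT d F n x * Real.exp (-((n : ℝ) / 2) * (F y - F x)) *
      (Real.sqrt (m y / piT d F n y) - Real.sqrt (m x / piT d F n x)) ^ 2 := by
  set Z := ZT d F n
  set a := Real.exp (-((n : ℝ) / 2) * F x) with ha
  set b := Real.exp (-((n : ℝ) / 2) * F y) with hb
  set t := Real.exp (-((n : ℝ) / 2) * (ψ y - ψ x) / 2) with ht
  have ha0 : 0 < a := Real.exp_pos _
  have hb0 : 0 < b := Real.exp_pos _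
  have ht0 : 0 < t := Real.exp_pos _
  set z := Real.sqrt Z with hz
  have hz0 : 0 < z := Real.sqrt_pos.2 hZ
  have hzz : z ^ 2 = Z := Real.sq_sqrt hZ.le
  set p := Real.sqrt (m x) with hp
  set q := Real.sqrt (m y) with hq
  have hpp : p ^ 2 = m x := Real.sq_sqrt hx
  have hqq : q ^ 2 = m y := Real.sq_sqrt hy
  have e1 : piT d F n x = (a / z) ^ 2 := by
    rw [div_pow, hzz, ha, ← Real.exp_nat_mul, piT]; congr 2; push_cast; ring
  have e2 : piT d F n y = (b / z) ^ 2 := by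
    rw [div_pow, hzz, hb, ← Real.exp_nat_mul, piT]; congr 2; push_cast; ring
  have e3 : Real.exp (-((n : ℝ) / 2) * (F y - F x)) = b / a := by
    rw [ha, hb, ← Real.exp_sub]; congr 1; ring
  have e4 : Real.exp (-((n : ℝ) / 2) * (F x - F y)) = a / b := by
    rw [ha, hb, ← Real.exp_sub]; congr 1; ring
  have e5 : Real.exp (-((n : ℝ) / 2) * (ψ y - ψ x)) = t ^ 2 := by
    rw [ht, ← Real.exp_nat_mul]; congr 1; push_cast; ring
  have e6 : Real.exp (-((n : ℝ) / 2) * (ψ x - ψ y)) = (t⁻¹) ^ 2 := by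
    rw [ht, ← Real.exp_neg, ← Real.exp_nat_mul]; congr 1; push_cast; ring
  have s1 : Real.sqrt (m x / piT d F n x) = p / (a / z) := by
    rw [e1, Real.sqrt_div hx, Real.sqrt_sq (by positivity)]
  have s2 : Real.sqrt (m y / piT d F n y) = q / (b / z) := by
    rw [e2, Real.sqrt_div hy, Real.sqrt_sq (by positivity)]
  rw [s1, s2, e1, e3, e4, e5, e6, ← hpp, ← hqq]
  have e7 : (a / z) ^ 2 * (b / a) * (q / (b / z) - p / (a / z)) ^ 2
      = p ^ 2 * (b / a) + q ^ 2 * (a / b) - 2 * p * q := by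
    field_simp
    ring
  have e8 : 0 ≤ (p * t - q * t⁻¹) ^ 2 := sq_nonneg _
  have e9 : (p * t - q * t⁻¹) ^ 2 = p ^ 2 * t ^ 2 + q ^ 2 * t⁻¹ ^ 2 - 2 * p * q := by
    field_simp
    ring
  rw [e7]
  rw [e9] at e8
  linarith

/-- The Donsker–Varadhan type lower bound: the rate functional dominates the average of
`-(L u)/u`, here written with `u = e^{n(F-ψ)/2}` for an arbitrary periodic `ψ`. -/
lemma IT_lower {d : ℕ} {F ψ : (Fin d → ℝ) → ℝ} (hF : PerT d F) (hψ : PerT d ψ) {n : ℕ}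
    (hn : 3 ≤ n) {m : (Fin d → ℝ) → ℝ} (hm : ∀ x ∈ XiT d n, 0 ≤ m x) :
    ∑ x ∈ XiT d n, m x * (exitE F n x - exitE ψ n x) ≤ n * IT d F n m := by
  have hn0 : 0 < n := by omega
  have hZ : 0 < ZT d F n := by
    refine Finset.sum_pos (fun x _ => Real.exp_pos _) ⟨0, (mem_XiT hn0).2 fun i => ⟨by simp, 0, ?_⟩⟩
    simp
  -- `k x y` is the flow attached to the oriented edge `(x, y)`; symmetrizing it over the two
  -- orientations produces the edge terms of the rate functional
  set k : (Fin d → ℝ) → (Fin d → ℝ) → ℝ := fun x y => if y ≠ x ∧ NbrT d n x y then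
    m x * (Real.exp (-((n : ℝ) / 2) * (F y - F x)) - Real.exp (-((n : ℝ) / 2) * (ψ y - ψ x)))
    else 0 with hk
  have herase : ∀ x ∈ XiT d n, ∀ f : (Fin d → ℝ) → ℝ,
      ∑ y ∈ (XiT d n).erase x, f y = ∑ y ∈ XiT d n, if y ≠ x then f y else 0 := by
    intro x hx f
    rw [← Finset.sum_filter, Finset.filter_ne']
  have h1 : ∀ x ∈ XiT d n, m x * (exitE F n x - exitE ψ n x) = n * ∑ y ∈ XiT d n, k x y := by
    intro x hx
    have hper : PerT d (fun y => Real.exp (-((n : ℝ) / 2) * (F y - F x))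
        - Real.exp (-((n : ℝ) / 2) * (ψ y - ψ x))) := by
      intro y v
      simp only [hF y v, hψ y v]
    have h := sum_nbr hn hx hper
    have e : ∑ y ∈ XiT d n, k x y = m x * ∑ y ∈ (XiT d n).erase x, (if NbrT d n x y then
        (Real.exp (-((n : ℝ) / 2) * (F y - F x)) - Real.exp (-((n : ℝ) / 2) * (ψ y - ψ x)))
        else 0) := by
      rw [herase x hx, Finset.mul_sum]
      refine Finset.sum_congr rfl fun y _ => ?_
      simp only [hk]
      by_cases h1 : y ≠ x <;> by_cases h2 : NbrT d n x y <;> simp [h1, h2]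
    rw [e, h, exitE, exitE, ← mul_sub, ← Finset.sum_sub_distrib]
    simp only [edgeE]
    rw [mul_left_comm]
    congr 2
    refine Finset.sum_congr rfl fun i _ => ?_
    ring
  have h2 : ∑ x ∈ XiT d n, ∑ y ∈ XiT d n, (k x y + k y x) ≤ 2 * IT d F n m := by
    unfold IT
    rw [← mul_assoc]
    norm_num
    refine Finset.sum_le_sum fun x hx => ?_
    rw [herase x hx]
    refine Finset.sum_le_sum fun y hy => ?_
    by_cases hyx : y = x
    · subst hyx; simp [hk]
    · by_cases hN : NbrT d n x y
      · simp only [hk, RT, hyx, Ne.symm hyx, hN, hN.symm, Ne, not_false_eq_true, and_self, if_true]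
        exact edge_bound F ψ (hm x hx) (hm y hy) hZ
      · have hN' : ¬ NbrT d n y x := fun h => hN h.symm
        simp [hk, RT, hN, hN']
  have h3 : ∑ x ∈ XiT d n, ∑ y ∈ XiT d n, (k x y + k y x)
      = 2 * ∑ x ∈ XiT d n, ∑ y ∈ XiT d n, k x y := by
    simp only [Finset.sum_add_distrib]
    rw [Finset.sum_comm (f := fun x y => k y x)]
    ring
  rw [Finset.sum_congr rfl h1, ← Finset.mul_sum]
  have : ∑ x ∈ XiT d n, ∑ y ∈ XiT d n, k x y ≤ IT d F n m := by linarith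
  gcongr

/-! ### Reduction to the choice of a test function -/

lemma PerT.leadE {d : ℕ} {G : (Fin d → ℝ) → ℝ} (hG : PerT d G) : PerT d (leadE G) := by
  intro x v
  simp only [_root_.leadE, hG.pd _ x v]

lemma PerT.corrE {d : ℕ} {G : (Fin d → ℝ) → ℝ} (hG : PerT d G) : PerT d (corrE G) := by
  intro x v
  simp only [_root_.corrE, hG.pd _ x v, hG.pdd _ x v]

lemma continuous_leadE {d : ℕ} {G : (Fin d → ℝ) → ℝ} (hG : ContDiff ℝ 2 G) :
    Continuous (leadE G) := by
  have := continuous_pd hG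
  unfold leadE
  exact continuous_finsetSum _ fun i _ => (Real.continuous_cosh.comp ((this i).div_const 2)).const_mul 2

lemma continuous_corrE {d : ℕ} {G : (Fin d → ℝ) → ℝ} (hG : ContDiff ℝ 2 G) :
    Continuous (corrE G) := by
  have h1 := continuous_pd hG
  have h2 := continuous_pdd hG
  unfold corrE
  exact continuous_finsetSum _ fun i _ =>
    ((h2 i).div_const 2).mul (Real.continuous_cosh.comp ((h1 i).div_const 2))

lemma per_integrable {d : ℕ} {g : (Fin d → ℝ) → ℝ} (hg : PerT d g) (hc : Continuous g)
    (μ : Measure (Fin d → ℝ)) [IsProbabilityMeasure μ] : Integrable g μ := by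
  obtain ⟨C, -, hC⟩ := per_bounded hg hc
  exact Integrable.of_bound hc.aestronglyMeasurable C (Eventually.of_forall hC)

/-- Each admissible `ψ` (dominated by `F` at leading order) bounds the liminf from below, and the
nonnegative leading-order difference may be weighted by an arbitrarily large constant `M`. -/
lemma liminf_lower {d : ℕ} {F ψ : (Fin d → ℝ) → ℝ} (hF : PerT d F) (hFC : ContDiff ℝ 2 F)
    (hψ : PerT d ψ) (hψC : ContDiff ℝ 2 ψ) (hle : ∀ x, leadE ψ x ≤ leadE F x)
    (μ : Measure (Fin d → ℝ)) [IsProbabilityMeasure μ]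
    (μn : ℕ → (Fin d → ℝ) → ℝ)
    (hμn : ∀ n, 0 < n →
      (∀ x ∈ XiT d n, 0 ≤ μn n x) ∧ ∑ x ∈ XiT d n, μn n x = 1)
    (hweak : ∀ g : (Fin d → ℝ) → ℝ, Continuous g → PerT d g →
      Tendsto (fun n => ∑ x ∈ XiT d n, μn n x * g x) atTop
        (nhds (∫ x, g x ∂μ))) (M : ℝ) {ε : ℝ} (hε : 0 < ε) :
    ENNReal.ofReal (M * ∫ x, (leadE F x - leadE ψ x) ∂μ
        + ∫ x, (corrE ψ x - corrE F x) ∂μ - ε) ≤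
      liminf (fun n : ℕ => ENNReal.ofReal ((n : ℝ) * IT d F n (μn n))) atTop := by
  have hWc : Continuous fun x => leadE F x - leadE ψ x :=
    (continuous_leadE hFC).sub (continuous_leadE hψC)
  have hAc : Continuous fun x => corrE ψ x - corrE F x :=
    (continuous_corrE hψC).sub (continuous_corrE hFC)
  have hWp : PerT d fun x => leadE F x - leadE ψ x := fun x v => by
    simp only [hF.leadE x v, hψ.leadE x v]
  have hAp : PerT d fun x => corrE ψ x - corrE F x := fun x v => by
    simp only [hF.corrE x v, hψ.corrE x v]
  have hlim := ((((hweak _ hWc hWp).const_mul M).add (hweak _ hAc hAp)).sub_const ε)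
  rw [← ((ENNReal.continuous_ofReal.tendsto _).comp hlim).liminf_eq]
  refine liminf_le_liminf ?_
  filter_upwards [eventually_ge_atTop 3, exit_expand hFC hF (half_pos hε),
    exit_expand hψC hψ (half_pos hε), tendsto_natCast_atTop_atTop.eventually_ge_atTop M]
    with n hn h1 h2 hM
  obtain ⟨hpos, hsum⟩ := hμn n (by omega)
  refine ENNReal.ofReal_le_ofReal (le_trans ?_ (IT_lower hF hψ hn hpos))
  have e : M * ∑ x ∈ XiT d n, μn n x * (leadE F x - leadE ψ x)
      + ∑ x ∈ XiT d n, μn n x * (corrE ψ x - corrE F x) - ε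
      = ∑ x ∈ XiT d n, μn n x *
        (M * (leadE F x - leadE ψ x) + (corrE ψ x - corrE F x) - ε) := by
    have : ε = ∑ x ∈ XiT d n, μn n x * ε := by rw [← Finset.sum_mul, hsum, one_mul]
    conv_lhs => rw [this]
    rw [Finset.mul_sum, ← Finset.sum_add_distrib, ← Finset.sum_sub_distrib]
    refine Finset.sum_congr rfl fun x _ => ?_
    ring
  beta_reduce
  rw [e]
  refine Finset.sum_le_sum fun x hx => mul_le_mul_of_nonneg_left ?_ (hpos x hx)
  have a1 := (abs_le.1 (h1 x)).1
  have a2 := (abs_le.1 (h2 x)).2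
  have a3 : M * (leadE F x - leadE ψ x) ≤ n * (leadE F x - leadE ψ x) :=
    mul_le_mul_of_nonneg_right hM (sub_nonneg.2 (hle x))
  linarith

/-- The liminf bound follows from the existence of test functions `ψ` whose leading term is
dominated by that of `F`, strictly off the critical points, and whose corrector at critical
points exceeds that of `F` by almost `ζ`. If `μ` charges noncritical points, the leading terms
alone make the liminf infinite. -/
lemma main_of_test {d : ℕ} {F : (Fin d → ℝ) → ℝ} (hF : PerT d F) (hFC : ContDiff ℝ 2 F)
    (ζ : (Fin d → ℝ) → ℝ) (hζ : ∀ x, 0 ≤ ζ x)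
    (htest : ∀ ε : ℝ, 0 < ε → ∃ ψ : (Fin d → ℝ) → ℝ, ContDiff ℝ 2 ψ ∧ PerT d ψ ∧
      (∀ x, leadE ψ x ≤ leadE F x) ∧ (∀ x, fderiv ℝ F x ≠ 0 → leadE ψ x < leadE F x) ∧
      ∀ z, (∀ i, z i ∈ Set.Ico (0 : ℝ) 1) → fderiv ℝ F z = 0 →
        ζ z - ε ≤ corrE ψ z - corrE F z)
    (μ : Measure (Fin d → ℝ)) [IsProbabilityMeasure μ]
    (hμsupp : μ (Set.univ.pi fun _ => Set.Ico (0 : ℝ) 1) = 1)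
    (μn : ℕ → (Fin d → ℝ) → ℝ)
    (hμn : ∀ n, 0 < n →
      (∀ x ∈ XiT d n, 0 ≤ μn n x) ∧ ∑ x ∈ XiT d n, μn n x = 1)
    (hweak : ∀ g : (Fin d → ℝ) → ℝ, Continuous g → PerT d g →
      Tendsto (fun n => ∑ x ∈ XiT d n, μn n x * g x) atTop
        (nhds (∫ x, g x ∂μ))) :
    (∫⁻ x, (if fderiv ℝ F x = 0 then ENNReal.ofReal (ζ x) else ⊤) ∂μ) ≤
      liminf (fun n : ℕ => ENNReal.ofReal ((n : ℝ) * IT d F n (μn n))) atTop := by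
  have hbox : ∀ᵐ x ∂μ, ∀ i, x i ∈ Set.Ico (0 : ℝ) 1 := by
    have hm : MeasurableSet (Set.univ.pi fun _ : Fin d => Set.Ico (0 : ℝ) 1) :=
      MeasurableSet.univ_pi fun _ => measurableSet_Ico
    have := (prob_compl_eq_zero_iff hm).2 hμsupp
    filter_upwards [compl_mem_ae_iff.2 this] with x hx i
    simp only [compl_compl] at hx
    exact hx i (Set.mem_univ i)
  by_cases hcrit : ∀ᵐ x ∂μ, fderiv ℝ F x = 0
  · refine ENNReal.le_of_forall_pos_le_add fun ε hε _ => ?_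
    have hε' : (0 : ℝ) < ε / 2 := by positivity
    obtain ⟨ψ, hψC, hψ, hle, hlt, hz⟩ := htest _ hε'
    have h := liminf_lower hF hFC hψ hψC hle μ μn hμn hweak 0 hε'
    rw [zero_mul, zero_add] at h
    have hAc : Continuous fun x => corrE ψ x - corrE F x :=
      (continuous_corrE hψC).sub (continuous_corrE hFC)
    have hAp : PerT d fun x => corrE ψ x - corrE F x := fun x v => by
      simp only [hF.corrE x v, hψ.corrE x v]
    have hintegr := per_integrable hAp hAc μ
    have hint2 : Integrable (fun x => (corrE ψ x - corrE F x) + (ε : ℝ) / 2) μ :=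
      hintegr.add (integrable_const _)
    calc ∫⁻ x, (if fderiv ℝ F x = 0 then ENNReal.ofReal (ζ x) else ⊤) ∂μ
        ≤ ∫⁻ x, ENNReal.ofReal ((corrE ψ x - corrE F x) + ε / 2) ∂μ := by
          refine lintegral_mono_ae ?_
          filter_upwards [hbox, hcrit] with x hx hc
          rw [if_pos hc]
          exact ENNReal.ofReal_le_ofReal (by linarith [hz x hx hc])
      _ = ENNReal.ofReal (∫ x, ((corrE ψ x - corrE F x) + ε / 2) ∂μ) := by
          rw [ofReal_integral_eq_lintegral_ofReal hint2]
          filter_upwards [hbox, hcrit] with x hx hc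
          have := hζ x
          have := hz x hx hc
          show (0 : ℝ) ≤ (corrE ψ x - corrE F x) + ε / 2
          linarith
      _ = ENNReal.ofReal (((∫ x, (corrE ψ x - corrE F x) ∂μ) - ε / 2) + ε) := by
          rw [integral_add hintegr (integrable_const _)]
          congr 1
          simp
          ring
      _ ≤ ENNReal.ofReal ((∫ x, (corrE ψ x - corrE F x) ∂μ) - ε / 2) + ENNReal.ofReal ε :=
          ENNReal.ofReal_add_le
      _ ≤ _ := by
          rw [ENNReal.ofReal_coe_nnreal]
          gcongr
  · obtain ⟨ψ, hψC, hψ, hle, hlt, -⟩ := htest 1 one_pos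
    have hWc : Continuous fun x => leadE F x - leadE ψ x :=
      (continuous_leadE hFC).sub (continuous_leadE hψC)
    have hWp : PerT d fun x => leadE F x - leadE ψ x := fun x v => by
      simp only [hF.leadE x v, hψ.leadE x v]
    have hpos : 0 < ∫ x, (leadE F x - leadE ψ x) ∂μ := by
      have h0 : 0 ≤ fun x => leadE F x - leadE ψ x := fun x => sub_nonneg.2 (hle x)
      refine (integral_nonneg h0).lt_of_ne' fun h => hcrit ?_
      rw [integral_eq_zero_iff_of_nonneg h0 (per_integrable hWp hWc μ)] at h
      filter_upwards [h] with x hx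
      by_contra hc
      have := hlt x hc
      simp only [Pi.zero_apply] at hx
      linarith
    set w := ∫ x, (leadE F x - leadE ψ x) ∂μ
    have htop : Tendsto (fun M : ℝ => ENNReal.ofReal (M * w
        + ∫ x, (corrE ψ x - corrE F x) ∂μ - 1)) atTop (nhds ⊤) := by
      refine ENNReal.tendsto_ofReal_atTop.comp ?_
      simp only [add_sub_assoc]
      exact tendsto_atTop_add_const_right _ _ (tendsto_id.atTop_mul_const hpos)
    have := le_of_tendsto' htop fun M =>
      liminf_lower hF hFC hψ hψC hle μ μn hμn hweak M one_pos
    exact le_top.trans this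

/-! ### A smooth truncation -/

lemma hasDerivAt_max_pow (k : ℕ) (t : ℝ) :
    HasDerivAt (fun t : ℝ => (max 0 t) ^ (k + 2)) ((k + 2) * (max 0 t) ^ (k + 1)) t := by
  rcases lt_trichotomy t 0 with ht | rfl | ht
  · have h : (fun t : ℝ => (max 0 t) ^ (k + 2)) =ᶠ[nhds t] fun _ => 0 := by
      filter_upwards [eventually_lt_nhds ht] with s hs
      rw [max_eq_left hs.le, zero_pow (by omega)]
    rw [max_eq_left ht.le, zero_pow (by omega), mul_zero]
    exact (hasDerivAt_const t (0 : ℝ)).congr_of_eventuallyEq h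
  · have hO : (fun t : ℝ => (max 0 t) ^ (k + 2)) =O[nhds 0] fun t : ℝ => ‖t - 0‖ ^ (k + 2) := by
      refine Asymptotics.IsBigO.of_bound 1 (Eventually.of_forall fun t => ?_)
      rw [sub_zero, one_mul, norm_pow, norm_pow, norm_norm]
      refine pow_le_pow_left₀ (norm_nonneg _) ?_ _
      rw [Real.norm_of_nonneg (le_max_left _ _), Real.norm_eq_abs]
      exact max_le (abs_nonneg _) (le_abs_self _)
    have := (hO.hasFDerivAt (by omega)).hasDerivAt
    simpa using this
  · have h : (fun t : ℝ => (max 0 t) ^ (k + 2)) =ᶠ[nhds t] fun s => s ^ (k + 2) := by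
      filter_upwards [eventually_gt_nhds ht] with s hs
      rw [max_eq_right hs.le]
    rw [max_eq_right ht.le]
    have := (hasDerivAt_pow (k + 2) t).congr_of_eventuallyEq h
    rwa [show k + 2 - 1 = k + 1 from rfl, Nat.cast_add, Nat.cast_ofNat] at this

lemma contDiff_max_cube : ContDiff ℝ 2 (fun t : ℝ => (max 0 t) ^ 3) := by
  have h3 := hasDerivAt_max_pow 1
  have h2 := hasDerivAt_max_pow 0
  have e3 : deriv (fun t : ℝ => (max 0 t) ^ 3) = fun t => 3 * (max 0 t) ^ 2 := by
    funext t
    rw [(h3 t).deriv]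
    norm_num
  have hc2 : ContDiff ℝ 1 (fun t : ℝ => (max 0 t) ^ 2) := by
    rw [contDiff_one_iff_deriv]
    refine ⟨fun t => (h2 t).differentiableAt, ?_⟩
    have : deriv (fun t : ℝ => (max 0 t) ^ 2) = fun t => (((0 : ℕ) : ℝ) + 2) * (max 0 t) ^ (0 + 1) :=
      funext fun t => (h2 t).deriv
    rw [this]
    fun_prop
  rw [show (2 : WithTop ℕ∞) = 1 + 1 by norm_num, contDiff_succ_iff_deriv]
  refine ⟨fun t => (h3 t).differentiableAt, by simp, ?_⟩
  rw [e3]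
  exact contDiff_const.mul hc2

/-- A `C²` truncation: `capT r s ≈ s` near `s = 0`, and `capT r` is constant on `[r, ∞)`. -/
def capT (r s : ℝ) : ℝ := r / 3 * (1 - (max 0 (1 - s / r)) ^ 3)

/-- The derivative of `capT r`; it takes values in `[0, 1]` on `[0, ∞)`, is `1` at `0` and
vanishes on `[r, ∞)`. -/
def capT' (r s : ℝ) : ℝ := (max 0 (1 - s / r)) ^ 2

lemma contDiff_capT (r : ℝ) : ContDiff ℝ 2 (capT r) := by
  unfold capT
  exact contDiff_const.mul (contDiff_const.sub (contDiff_max_cube.comp (by fun_prop)))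

lemma hasDerivAt_capT {r : ℝ} (hr : 0 < r) (s : ℝ) : HasDerivAt (capT r) (capT' r s) s := by
  have h1 : HasDerivAt (fun s : ℝ => 1 - s / r) (-(1 / r)) s := by
    simpa using ((hasDerivAt_id s).div_const r).const_sub 1
  have h2 := (((hasDerivAt_max_pow 1 (1 - s / r)).comp s h1).const_sub 1).const_mul (r / 3)
  have e : r / 3 * -((((1 : ℕ) : ℝ) + 2) * (max 0 (1 - s / r)) ^ (1 + 1) * -(1 / r))
      = capT' r s := by
    unfold capT'
    push_cast
    field_simp
    ring
  rw [e] at h2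
  exact h2

lemma differentiable_capT' (r : ℝ) : Differentiable ℝ (capT' r) := by
  have h2 : Differentiable ℝ (fun t : ℝ => (max 0 t) ^ 2) := fun t =>
    (hasDerivAt_max_pow 0 t).differentiableAt
  unfold capT'
  exact h2.comp (by fun_prop)

lemma capT'_mem {r s : ℝ} (hr : 0 < r) (hs : 0 ≤ s) : 0 ≤ capT' r s ∧ capT' r s ≤ 1 := by
  refine ⟨by unfold capT'; positivity, ?_⟩
  unfold capT'
  refine pow_le_one₀ (le_max_left _ _) (max_le zero_le_one ?_)
  have : 0 ≤ s / r := by positivity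
  linarith

lemma capT'_zero (r : ℝ) : capT' r 0 = 1 := by simp [capT']

lemma capT'_of_le {r s : ℝ} (hr : 0 < r) (hs : r ≤ s) : capT' r s = 0 := by
  have : 1 ≤ s / r := (one_le_div hr).2 hs
  rw [capT', max_eq_left (by linarith)]
  norm_num

/-! ### Comparison of two gradient fields near a common zero -/

lemma cosh_lower (t : ℝ) : 1 + t ^ 2 / 2 ≤ Real.cosh t := by
  have h1 : Real.cosh t = 1 + 2 * Real.sinh (t / 2) ^ 2 := by
    have := Real.cosh_two_mul (t / 2)
    rw [mul_div_cancel₀ t two_ne_zero] at this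
    rw [this, Real.cosh_sq]
    ring
  have h2 : |t / 2| ≤ |Real.sinh (t / 2)| := by
    rw [Real.abs_sinh]
    exact Real.self_le_sinh_iff.2 (abs_nonneg _)
  have h3 := sq_le_sq.2 h2
  rw [h1]
  linarith

lemma young_sq {η a u : ℝ} (hη : 0 < η) :
    a ^ 2 ≤ (1 + η) * u ^ 2 + (1 + 1 / η) * (a - u) ^ 2 := by
  have : (1 + η) * u ^ 2 + (1 + 1 / η) * (a - u) ^ 2 - a ^ 2 = (η * u - (a - u)) ^ 2 / η := by
    field_simp
    ring
  have h2 : 0 ≤ (η * u - (a - u)) ^ 2 / η := by positivity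
  linarith

/-- If the linearization of `v` at a common zero of `u` and `v` is strictly dominated by the
nondegenerate linearization of `u`, then `∑ cosh(v/2) ≤ ∑ cosh(u/2)` near this zero. -/
lemma cosh_compare {d : ℕ} {u v : Fin d → (Fin d → ℝ) → ℝ} {z : Fin d → ℝ}
    {a b : Fin d → ((Fin d → ℝ) →L[ℝ] ℝ)}
    (hu : ∀ j, HasFDerivAt (u j) (a j) z) (hv : ∀ j, HasFDerivAt (v j) (b j) z)
    (hu0 : ∀ j, u j z = 0) (hv0 : ∀ j, v j z = 0) {δ c : ℝ} (hδ : 0 < δ) (hδ1 : δ ≤ 1)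
    (hc : 0 < c) (hab : ∀ y, ∑ j, (b j y) ^ 2 ≤ (1 - δ) * ∑ j, (a j y) ^ 2)
    (hca : ∀ y, c * ‖y‖ ^ 2 ≤ ∑ j, (a j y) ^ 2) :
    ∀ᶠ x in nhds z, (∑ j, 2 * Real.cosh (v j x / 2) ≤ ∑ j, 2 * Real.cosh (u j x / 2)) ∧
      (x ≠ z → ∑ j, 2 * Real.cosh (v j x / 2) < ∑ j, 2 * Real.cosh (u j x / 2)) := by
  -- `(1 + η)³ (1 - δ) + η (1 + η)² ≤ 1 - 2η` once `δ = 8η`: this absorbs the linearization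
  -- errors, which cost a factor `1 + η` for each use of Young's inequality, and the error of
  -- replacing `2 cosh(v/2)` by its quadratic Taylor polynomial
  set η := δ / 8 with hη
  have hη0 : 0 < η := by positivity
  have hη1 : η ≤ 1 / 8 := by linarith
  set ε := Real.sqrt (η * c / ((1 + 1 / η) * (d + 1))) with hε
  have hε0 : 0 < ε := Real.sqrt_pos.2 (by positivity)
  have hεsq : (1 + 1 / η) * (d + 1) * ε ^ 2 = η * c := by
    rw [hε, Real.sq_sqrt (by positivity)]
    field_simp
  have e1 : ∀ᶠ x in nhds z, ∀ j, ‖u j x - u j z - a j (x - z)‖ ≤ ε * ‖x - z‖ :=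
    eventually_all.2 fun j => (hu j).isLittleO.bound hε0
  have e2 : ∀ᶠ x in nhds z, ∀ j, ‖v j x - v j z - b j (x - z)‖ ≤ ε * ‖x - z‖ :=
    eventually_all.2 fun j => (hv j).isLittleO.bound hε0
  have e3 : ∀ᶠ x in nhds z, ∀ j, (v j x) ^ 2 / 8 < η := by
    refine eventually_all.2 fun j => ?_
    have : ContinuousAt (fun x => (v j x) ^ 2 / 8) z := ((hv j).continuousAt.pow 2).div_const 8
    refine this.eventually_lt_const ?_
    simpa [hv0 j] using hη0
  filter_upwards [e1, e2, e3] with x h1 h2 h3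
  set y := x - z with hy
  set S := ∑ j, (a j y) ^ 2 with hS
  set U := ∑ j, (u j x) ^ 2 with hU
  set V := ∑ j, (v j x) ^ 2 with hV
  have hS0 : 0 ≤ S := Finset.sum_nonneg fun j _ => sq_nonneg _
  have herr : (1 + 1 / η) * (d * (ε * ‖y‖) ^ 2) ≤ η * S := by
    have := hca y
    calc (1 + 1 / η) * (d * (ε * ‖y‖) ^ 2) ≤ (1 + 1 / η) * ((d + 1) * (ε * ‖y‖) ^ 2) := by
          gcongr; linarith
      _ = ((1 + 1 / η) * (d + 1) * ε ^ 2) * ‖y‖ ^ 2 := by ring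
      _ = η * (c * ‖y‖ ^ 2) := by rw [hεsq]; ring
      _ ≤ η * S := by gcongr
  have hSU : S ≤ (1 + η) * U + η * S := by
    refine le_trans ?_ (add_le_add_right herr _)
    rw [hS, hU, Finset.mul_sum]
    have : (1 + 1 / η) * (d * (ε * ‖y‖) ^ 2) = ∑ _j : Fin d, (1 + 1 / η) * (ε * ‖y‖) ^ 2 := by
      simp; ring
    rw [this, ← Finset.sum_add_distrib]
    refine Finset.sum_le_sum fun j _ => (young_sq hη0 (u := u j x)).trans ?_
    gcongr (1 + η) * u j x ^ 2 + (1 + 1 / η) * ?_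
    have := h1 j
    rw [hu0, sub_zero, Real.norm_eq_abs, abs_sub_comm] at this
    rw [← sq_abs]
    gcongr
  have hVS : V ≤ (1 + η) * ((1 - δ) * S) + η * S := by
    refine le_trans ?_ (add_le_add (mul_le_mul_of_nonneg_left (hab y) (by positivity)) herr)
    rw [hV, Finset.mul_sum]
    have : (1 + 1 / η) * (d * (ε * ‖y‖) ^ 2) = ∑ _j : Fin d, (1 + 1 / η) * (ε * ‖y‖) ^ 2 := by
      simp; ring
    rw [this, ← Finset.sum_add_distrib]
    refine Finset.sum_le_sum fun j _ => (young_sq hη0 (u := b j y)).trans ?_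
    gcongr (1 + η) * b j y ^ 2 + (1 + 1 / η) * ?_
    have := h2 j
    rw [hv0, sub_zero, Real.norm_eq_abs] at this
    rw [← sq_abs]
    gcongr
  have hcv : ∑ j, 2 * Real.cosh (v j x / 2) ≤ ∑ _j : Fin d, 2 + (1 + η) * V / 4 := by
    rw [hV, mul_div_assoc, Finset.sum_div, Finset.mul_sum, ← Finset.sum_add_distrib]
    refine Finset.sum_le_sum fun j _ => ?_
    have k1 := Real.cosh_le_exp_half_sq (v j x / 2)
    have k2 : (v j x / 2) ^ 2 / 2 = v j x ^ 2 / 8 := by ring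
    rw [k2] at k1
    have k3 : 0 ≤ v j x ^ 2 / 8 := by positivity
    have k4 := h3 j
    have k5 := (abs_le.1 (Real.abs_exp_sub_one_sub_id_le (x := v j x ^ 2 / 8)
      (by rw [abs_of_nonneg k3]; linarith))).2
    nlinarith
  have hcu : ∑ _j : Fin d, 2 + U / 4 ≤ ∑ j, 2 * Real.cosh (u j x / 2) := by
    rw [hU, Finset.sum_div, ← Finset.sum_add_distrib]
    refine Finset.sum_le_sum fun j _ => ?_
    have := cosh_lower (u j x / 2)
    nlinarith
  have hδη : δ = 8 * η := by rw [hη]; ring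
  have hfin : (1 + η) * ((1 + η) * V) ≤ (1 + η) * U - η * S := by
    have q1 : (1 + η) * ((1 + η) * V)
        ≤ (1 + η) * ((1 + η) * ((1 + η) * ((1 - δ) * S) + η * S)) := by gcongr
    have q2 : (1 - η) * S ≤ (1 + η) * U := by linarith
    have q3 : (1 + η) * ((1 + η) * ((1 + η) * (1 - δ) + η)) ≤ 1 - 2 * η := by
      rw [hδη]
      nlinarith [mul_nonneg hη0.le hη0.le, mul_nonneg (mul_nonneg hη0.le hη0.le) hη0.le]
    have q4 := mul_le_mul_of_nonneg_right q3 hS0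
    linarith
  constructor
  · have : (1 + η) * V ≤ U := by
      have : (1 + η) * ((1 + η) * V) ≤ (1 + η) * U := by
        have := mul_nonneg hη0.le hS0
        linarith
      exact le_of_mul_le_mul_left this (by positivity)
    linarith
  · intro hxz
    have hy0 : 0 < ‖y‖ := norm_pos_iff.2 (sub_ne_zero.2 hxz)
    have hSpos : 0 < S := lt_of_lt_of_le (by positivity) (hca y)
    have : (1 + η) * V < U := by
      have : (1 + η) * ((1 + η) * V) < (1 + η) * U := by
        have := mul_pos hη0 hSpos
        linarith
      exact lt_of_mul_lt_mul_left this (by positivity)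
    linarith

/-! ### The absolute value of a symmetric matrix -/

/-- The absolute value `P = |H|` of a nonsingular symmetric matrix `H`: positive, with
trace `∑ |λᵢ|`, and `|P y| = |H y|` because `P² = H²`. -/
lemma exists_abs_matrix {d : ℕ} {H : Matrix (Fin d) (Fin d) ℝ} (hH : H.IsHermitian)
    (hne : ∀ i, hH.eigenvalues i ≠ 0) :
    ∃ P : Matrix (Fin d) (Fin d) ℝ, (∀ i j, P i j = P j i) ∧
      (∀ y : Fin d → ℝ, 0 ≤ ∑ j, ∑ k, P j k * (y j * y k)) ∧
      (∑ j, P j j = ∑ j, |hH.eigenvalues j|) ∧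
      (∀ y : Fin d → ℝ, ∑ j, (∑ k, P j k * y k) ^ 2 = ∑ j, (∑ k, H j k * y k) ^ 2) ∧
      ∃ c > 0, ∀ y : Fin d → ℝ, c * ‖y‖ ^ 2 ≤ ∑ j, (∑ k, H j k * y k) ^ 2 := by
  set U : Matrix (Fin d) (Fin d) ℝ := (hH.eigenvectorUnitary : Matrix (Fin d) (Fin d) ℝ) with hU
  have hUU : star U * U = 1 := Unitary.coe_star_mul_self hH.eigenvectorUnitary
  set D : Matrix (Fin d) (Fin d) ℝ := Matrix.diagonal hH.eigenvalues with hD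
  set E : Matrix (Fin d) (Fin d) ℝ := Matrix.diagonal (fun i => |hH.eigenvalues i|) with hE
  have hspec : H = U * D * star U := by
    have := hH.spectral_theorem
    simpa [Unitary.conjStarAlgAut_apply] using this
  have hP : (U * E * star U).PosSemidef := by
    have hE' : E.PosSemidef := Matrix.PosSemidef.diagonal fun i => abs_nonneg _
    exact hE'.mul_mul_conjTranspose_same U
  have hsq : (U * E * star U) * (U * E * star U) = H * H := by
    have hEE : E * E = D * D := by
      rw [hE, hD, Matrix.diagonal_mul_diagonal, Matrix.diagonal_mul_diagonal]
      congr 1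
      funext i
      exact abs_mul_abs_self _
    calc (U * E * star U) * (U * E * star U) = U * (E * (star U * U) * E) * star U := by
          simp only [Matrix.mul_assoc]
      _ = U * (D * (star U * U) * D) * star U := by rw [hUU, mul_one, mul_one, hEE]
      _ = (U * D * star U) * (U * D * star U) := by simp only [Matrix.mul_assoc]
      _ = H * H := by rw [← hspec]
  have hsymP : ∀ i j, (U * E * star U) i j = (U * E * star U) j i := fun i j => by
    simpa using (hP.isHermitian.apply i j).symm
  have hsymH : ∀ i j, H i j = H j i := fun i j => by simpa using (hH.apply i j).symm
  have hnorm : ∀ (A : Matrix (Fin d) (Fin d) ℝ), (∀ i j, A i j = A j i) → ∀ y : Fin d → ℝ,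
      ∑ j, (∑ k, A j k * y k) ^ 2 = y ⬝ᵥ ((A * A).mulVec y) := by
    intro A hA y
    have hAt : A.transpose = A := by ext i j; exact hA j i
    rw [← Matrix.mulVec_mulVec, Matrix.dotProduct_mulVec, ← Matrix.mulVec_transpose, hAt]
    simp [dotProduct, Matrix.mulVec, sq]
  refine ⟨U * E * star U, hsymP, fun y => ?_, ?_, fun y => ?_, ?_⟩
  · have := hP.dotProduct_mulVec_nonneg y
    have hs : star y = y := funext fun i => star_trivial (y i)
    rw [hs] at this
    refine this.trans_eq ?_
    simp only [dotProduct, Matrix.mulVec, Finset.mul_sum]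
    exact Finset.sum_congr rfl fun j _ => Finset.sum_congr rfl fun k _ => by ring
  · have : (U * E * star U).trace = ∑ j, |hH.eigenvalues j| := by
      rw [Matrix.trace_mul_cycle, hUU, one_mul, hE, Matrix.trace_diagonal]
    exact this
  · rw [hnorm _ hsymP, hnorm _ hsymH, hsq]
  · have hdet : IsUnit H := by
      rw [Matrix.isUnit_iff_isUnit_det, isUnit_iff_ne_zero, hH.det_eq_prod_eigenvalues]
      exact Finset.prod_ne_zero_iff.2 fun i _ => by simpa using hne i
    have hinj : Function.Injective H.mulVec := Matrix.mulVec_injective_iff_isUnit.2 hdet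
    obtain ⟨K, hK, hKa⟩ := LinearMap.exists_antilipschitzWith (Matrix.mulVecLin H)
      (LinearMap.ker_eq_bot.2 hinj)
    have hK' : (0 : ℝ) < K := hK
    refine ⟨1 / (K : ℝ) ^ 2, by positivity, fun y => ?_⟩
    have h1 : ‖y‖ ≤ K * ‖H.mulVec y‖ := by
      have := hKa.le_mul_dist y 0
      simpa using this
    have h2 : ‖H.mulVec y‖ ^ 2 ≤ ∑ j, (∑ k, H j k * y k) ^ 2 := by
      have h3 : ‖H.mulVec y‖ ≤ Real.sqrt (∑ j, (∑ k, H j k * y k) ^ 2) := by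
        refine (pi_norm_le_iff_of_nonneg (Real.sqrt_nonneg _)).2 fun j => ?_
        rw [Real.norm_eq_abs]
        refine Real.abs_le_sqrt ?_
        exact Finset.single_le_sum (f := fun j => (∑ k, H j k * y k) ^ 2)
          (fun j _ => sq_nonneg _) (Finset.mem_univ j)
      calc ‖H.mulVec y‖ ^ 2 ≤ Real.sqrt (∑ j, (∑ k, H j k * y k) ^ 2) ^ 2 := by gcongr
        _ = _ := Real.sq_sqrt (Finset.sum_nonneg fun j _ => sq_nonneg _)
    calc 1 / (K : ℝ) ^ 2 * ‖y‖ ^ 2 ≤ 1 / (K : ℝ) ^ 2 * (K * ‖H.mulVec y‖) ^ 2 := by gcongr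
      _ = ‖H.mulVec y‖ ^ 2 := by field_simp
      _ ≤ _ := h2

/-! ### The periodic profile at a critical point -/

/-- A periodic squared distance to `z` (up to constants): `∑ⱼ (1 - cos 2π(xⱼ - zⱼ))`. -/
def nearT {d : ℕ} (z x : Fin d → ℝ) : ℝ := ∑ j, (1 - Real.cos (2 * Real.pi * (x j - z j)))

/-- The periodic substitute `sin(2π(xⱼ - zⱼ))/(2π)` for the coordinate `xⱼ - zⱼ`. -/
def sT {d : ℕ} (z : Fin d → ℝ) (j : Fin d) (x : Fin d → ℝ) : ℝ :=
  Real.sin (2 * Real.pi * (x j - z j)) / (2 * Real.pi)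

/-- A periodic function whose Hessian at `z` is `θ P`, for `P` symmetric: a quadratic form in the
periodic coordinates plus a term of fourth order. The quadratic form alone would also vanish at
the half-integer translates of `z`; the second term makes the function positive off `z + ℤ^d`
when `P` is positive semidefinite and `θ ≥ 0`. -/
def profT {d : ℕ} (z : Fin d → ℝ) (P : Matrix (Fin d) (Fin d) ℝ) (θ : ℝ) (x : Fin d → ℝ) : ℝ :=
  θ / 2 * (∑ j, ∑ k, P j k * (sT z j x * sT z k x)) + nearT z x ^ 2

/-- The partial derivatives of `profT`, for symmetric `P`. -/
def gradT {d : ℕ} (z : Fin d → ℝ) (P : Matrix (Fin d) (Fin d) ℝ) (θ : ℝ) (j : Fin d)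
    (x : Fin d → ℝ) : ℝ :=
  θ * (Real.cos (2 * Real.pi * (x j - z j)) * ∑ k, P j k * sT z k x)
    + nearT z x * (2 * (2 * Real.pi * Real.sin (2 * Real.pi * (x j - z j))))

lemma per_trig (t c : ℝ) (m : ℤ) :
    2 * Real.pi * (t + m - c) = 2 * Real.pi * (t - c) + m * (2 * Real.pi) := by ring

lemma per_nearT {d : ℕ} (z : Fin d → ℝ) : PerT d (nearT z) := by
  intro x v
  simp only [nearT, per_trig, Real.cos_add_int_mul_two_pi]

lemma per_sT {d : ℕ} (z : Fin d → ℝ) (j : Fin d) : PerT d (sT z j) := by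
  intro x v
  simp only [sT, per_trig, Real.sin_add_int_mul_two_pi]

lemma per_profT {d : ℕ} (z : Fin d → ℝ) (P : Matrix (Fin d) (Fin d) ℝ) (θ : ℝ) :
    PerT d (profT z P θ) := by
  intro x v
  simp only [profT, per_nearT z x v, per_sT z _ x v]

lemma contDiff_nearT {d : ℕ} (z : Fin d → ℝ) : ContDiff ℝ 2 (nearT z) := by
  unfold nearT
  fun_prop

lemma contDiff_sT {d : ℕ} (z : Fin d → ℝ) (j : Fin d) : ContDiff ℝ 2 (sT z j) := by
  unfold sT
  fun_prop

lemma contDiff_profT {d : ℕ} (z : Fin d → ℝ) (P : Matrix (Fin d) (Fin d) ℝ) (θ : ℝ) :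
    ContDiff ℝ 2 (profT z P θ) := by
  have h1 := contDiff_nearT z
  have h2 := contDiff_sT z
  unfold profT
  fun_prop

lemma hasFDerivAt_angle {d : ℕ} (z : Fin d → ℝ) (j : Fin d) (x : Fin d → ℝ) :
    HasFDerivAt (fun x : Fin d → ℝ => 2 * Real.pi * (x j - z j))
      ((2 * Real.pi) • (ContinuousLinearMap.proj j : (Fin d → ℝ) →L[ℝ] ℝ)) x :=
  ((ContinuousLinearMap.proj (R := ℝ) (φ := fun _ : Fin d => ℝ) j).hasFDerivAt.sub_const
    (z j)).const_mul _

lemma hasFDerivAt_sT {d : ℕ} (z : Fin d → ℝ) (j : Fin d) (x : Fin d → ℝ) :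
    HasFDerivAt (sT z j)
      (Real.cos (2 * Real.pi * (x j - z j)) •
        (ContinuousLinearMap.proj j : (Fin d → ℝ) →L[ℝ] ℝ)) x := by
  have h := ((hasFDerivAt_angle z j x).sin).mul_const (2 * Real.pi)⁻¹
  have hpi : (2 * Real.pi)⁻¹ * (2 * Real.pi) = 1 := inv_mul_cancel₀ (by positivity)
  refine (h.congr_fderiv ?_)
  ext v
  simp only [_root_.smul_apply, ContinuousLinearMap.proj_apply, smul_eq_mul]
  linear_combination (Real.cos (2 * Real.pi * (x j - z j)) * v j) * hpi

lemma hasFDerivAt_nearT {d : ℕ} (z : Fin d → ℝ) (x : Fin d → ℝ) :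
    HasFDerivAt (nearT z)
      (∑ j, (2 * Real.pi * Real.sin (2 * Real.pi * (x j - z j))) •
        (ContinuousLinearMap.proj j : (Fin d → ℝ) →L[ℝ] ℝ)) x := by
  refine HasFDerivAt.fun_sum fun j _ => ?_
  refine ((hasFDerivAt_angle z j x).cos.const_sub 1).congr_fderiv ?_
  ext v
  simp only [_root_.smul_apply, ContinuousLinearMap.proj_apply, smul_eq_mul,
    _root_.neg_apply]
  ring

lemma hasFDerivAt_profT {d : ℕ} (z : Fin d → ℝ) {P : Matrix (Fin d) (Fin d) ℝ}
    (hP : ∀ i j, P i j = P j i) (θ : ℝ) (x : Fin d → ℝ) :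
    HasFDerivAt (profT z P θ)
      (∑ j, gradT z P θ j x • (ContinuousLinearMap.proj j : (Fin d → ℝ) →L[ℝ] ℝ)) x := by
  have h1 : HasFDerivAt (fun x => ∑ j, ∑ k, P j k * (sT z j x * sT z k x)) _ x :=
    HasFDerivAt.fun_sum fun j _ => HasFDerivAt.fun_sum fun k _ =>
      (((hasFDerivAt_sT z j x).mul (hasFDerivAt_sT z k x)).const_mul (P j k))
  have h2 := (h1.const_mul (θ / 2)).add ((hasFDerivAt_nearT z x).pow 2)
  refine h2.congr_fderiv ?_
  ext v
  simp only [_root_.add_apply, _root_.smul_apply,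
    _root_.sum_apply, ContinuousLinearMap.proj_apply, smul_eq_mul, gradT]
  have e : ∑ j, ∑ k, P j k * (sT z j x * (Real.cos (2 * Real.pi * (x k - z k)) * v k)
      + sT z k x * (Real.cos (2 * Real.pi * (x j - z j)) * v j))
      = 2 * ∑ j, (Real.cos (2 * Real.pi * (x j - z j)) * ∑ k, P j k * sT z k x) * v j := by
    have a1 : ∑ j, ∑ k, P j k * (sT z k x * (Real.cos (2 * Real.pi * (x j - z j)) * v j))
        = ∑ j, (Real.cos (2 * Real.pi * (x j - z j)) * ∑ k, P j k * sT z k x) * v j := by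
      refine Finset.sum_congr rfl fun j _ => ?_
      rw [Finset.mul_sum, Finset.sum_mul]
      exact Finset.sum_congr rfl fun k _ => by ring
    have a2 : ∑ j, ∑ k, P j k * (sT z j x * (Real.cos (2 * Real.pi * (x k - z k)) * v k))
        = ∑ j, ∑ k, P j k * (sT z k x * (Real.cos (2 * Real.pi * (x j - z j)) * v j)) := by
      rw [Finset.sum_comm]
      exact Finset.sum_congr rfl fun j _ => Finset.sum_congr rfl fun k _ => by rw [hP j k]
    simp only [mul_add, Finset.sum_add_distrib]
    rw [a2, a1]
    ring
  rw [e, ← mul_assoc, div_mul_cancel₀ θ two_ne_zero, Finset.mul_sum]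
  simp only [add_mul, Finset.sum_add_distrib, Finset.mul_sum]
  congr 1
  · refine Finset.sum_congr rfl fun j _ => ?_
    simp only [Finset.sum_mul, Finset.mul_sum]
    exact Finset.sum_congr rfl fun k _ => by ring
  · refine Finset.sum_congr rfl fun j _ => ?_
    norm_num
    ring

lemma pd_profT {d : ℕ} (z : Fin d → ℝ) {P : Matrix (Fin d) (Fin d) ℝ}
    (hP : ∀ i j, P i j = P j i) (θ : ℝ) (i : Fin d) (x : Fin d → ℝ) :
    pd (profT z P θ) i x = gradT z P θ i x := by
  rw [pd, (hasFDerivAt_profT z hP θ x).fderiv]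
  simp [_root_.sum_apply, Pi.single_apply]

lemma sT_self {d : ℕ} (z : Fin d → ℝ) (j : Fin d) : sT z j z = 0 := by simp [sT]

lemma nearT_self {d : ℕ} (z : Fin d → ℝ) : nearT z z = 0 := by simp [nearT]

lemma nearT_nonneg {d : ℕ} (z x : Fin d → ℝ) : 0 ≤ nearT z x :=
  Finset.sum_nonneg fun _ _ => sub_nonneg.2 (Real.cos_le_one _)

lemma profT_self {d : ℕ} (z : Fin d → ℝ) (P : Matrix (Fin d) (Fin d) ℝ) (θ : ℝ) :
    profT z P θ z = 0 := by simp [profT, sT_self, nearT_self]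

lemma gradT_self {d : ℕ} (z : Fin d → ℝ) (P : Matrix (Fin d) (Fin d) ℝ) (θ : ℝ) (j : Fin d) :
    gradT z P θ j z = 0 := by simp [gradT, sT_self, nearT_self]

lemma hasFDerivAt_gradT {d : ℕ} (z : Fin d → ℝ) (P : Matrix (Fin d) (Fin d) ℝ) (θ : ℝ)
    (j : Fin d) :
    HasFDerivAt (gradT z P θ j)
      (∑ k, (θ * P j k) • (ContinuousLinearMap.proj k : (Fin d → ℝ) →L[ℝ] ℝ)) z := by
  have h1 : HasFDerivAt (fun x => ∑ k, P j k * sT z k x) _ z :=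
    HasFDerivAt.fun_sum fun k _ => (hasFDerivAt_sT z k z).const_mul (P j k)
  have h2 := (((hasFDerivAt_angle z j z).cos.mul h1).const_mul θ).add
    ((hasFDerivAt_nearT z z).mul
      (((hasFDerivAt_angle z j z).sin.const_mul (2 * Real.pi)).const_mul 2))
  refine h2.congr_fderiv ?_
  ext v
  simp [_root_.sum_apply, sT_self, nearT_self, Finset.mul_sum, mul_assoc]

/-- Points where `nearT z` is small are close to a lattice translate of `z`. -/
lemma nearT_lt {d : ℕ} (z : Fin d → ℝ) {η : ℝ} (hη : 0 < η) :
    ∃ ρ > 0, ∀ x, nearT z x < ρ →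
      ∃ v : Fin d → ℤ, dist (fun i => x i + (v i : ℝ)) z < η := by
  refine ⟨8 * η ^ 2, by positivity, fun x hx => ⟨fun j => -round (x j - z j), ?_⟩⟩
  rw [dist_pi_lt_iff hη]
  intro j
  set t := x j - z j - round (x j - z j) with ht
  have h1 : |t| ≤ 1 / 2 := abs_sub_round _
  have h2 : Real.cos (2 * Real.pi * (x j - z j)) = Real.cos (2 * Real.pi * t) := by
    rw [ht, show 2 * Real.pi * (x j - z j - round (x j - z j))
      = 2 * Real.pi * (x j - z j) - round (x j - z j) * (2 * Real.pi) by ring,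
      Real.cos_sub_int_mul_two_pi]
  have h3 : |2 * Real.pi * t| ≤ Real.pi := by
    rw [abs_mul, abs_of_pos Real.two_pi_pos]
    nlinarith [Real.pi_pos]
  have h4 := Real.cos_le_one_sub_mul_cos_sq h3
  have h5 : 2 / Real.pi ^ 2 * (2 * Real.pi * t) ^ 2 = 8 * t ^ 2 := by
    have := Real.pi_ne_zero
    field_simp
    ring
  have h6 : 1 - Real.cos (2 * Real.pi * (x j - z j)) ≤ nearT z x :=
    Finset.single_le_sum (f := fun j => 1 - Real.cos (2 * Real.pi * (x j - z j)))
      (fun j _ => sub_nonneg.2 (Real.cos_le_one _)) (Finset.mem_univ j)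
  have h7 : t ^ 2 < η ^ 2 := by
    rw [h2] at h6
    linarith
  have h8 := abs_lt_of_sq_lt_sq h7 hη.le
  rw [Real.dist_eq]
  have e : x j + ((-round (x j - z j) : ℤ) : ℝ) - z j = t := by
    rw [ht]
    push_cast
    ring
  rw [e]
  exact h8

/-- The sublevel sets of `nearT` at distinct points of the torus are eventually disjoint. -/
lemma nearT_separated {d : ℕ} {z z' : Fin d → ℝ} (hz : ∀ i, z i ∈ Set.Ico (0 : ℝ) 1)
    (hz' : ∀ i, z' i ∈ Set.Ico (0 : ℝ) 1) (hne : z ≠ z') :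
    ∃ ρ > 0, ∀ x, ¬ (nearT z x < ρ ∧ nearT z' x < ρ) := by
  have hc : Continuous fun x => nearT z x + nearT z' x :=
    (contDiff_nearT z).continuous.add (contDiff_nearT z').continuous
  have hp : PerT d fun x => nearT z x + nearT z' x := fun x v => by
    simp only [per_nearT z x v, per_nearT z' x v]
  obtain ⟨w, -, hw⟩ := (isCompact_Icc (a := (0 : Fin d → ℝ)) (b := 1)).exists_isMinOn
    ⟨0, Set.left_mem_Icc.2 zero_le_one⟩ hc.continuousOn
  have hpos : 0 < nearT z w + nearT z' w := by
    refine (add_nonneg (nearT_nonneg _ _) (nearT_nonneg _ _)).lt_of_ne' fun h => hne ?_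
    have h_lift : ∀ z : Fin d → ℝ, nearT z w = 0 → ∀ j, ∃ m : ℤ, w j - z j = m := by
      intro z h j
      have h1 := (Finset.sum_eq_zero_iff_of_nonneg
        (fun j _ => sub_nonneg.2 (Real.cos_le_one _))).1 h j (Finset.mem_univ j)
      obtain ⟨m, hm⟩ := (Real.cos_eq_one_iff _).1 (sub_eq_zero.1 h1).symm
      refine ⟨m, ?_⟩
      have h2 := Real.two_pi_pos
      have : 2 * Real.pi * (w j - z j - m) = 0 := by linear_combination -hm
      have := (mul_eq_zero.1 this).resolve_left h2.ne'
      linarith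
    have h1 : nearT z w = 0 := by linarith [nearT_nonneg z w, nearT_nonneg z' w]
    have h2 : nearT z' w = 0 := by linarith [nearT_nonneg z w, nearT_nonneg z' w]
    funext j
    obtain ⟨m, hm⟩ := h_lift z h1 j
    obtain ⟨m', hm'⟩ := h_lift z' h2 j
    have e : z j - z' j = ((m' - m : ℤ) : ℝ) := by push_cast; linarith
    have b1 := hz j
    have b2 := hz' j
    have l1 : ((m' - m : ℤ) : ℝ) < 1 := by rw [← e]; linarith [b1.2, b2.1]
    have l2 : (-1 : ℝ) < ((m' - m : ℤ) : ℝ) := by rw [← e]; linarith [b1.1, b2.2]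
    have l3 : m' - m < 1 := by exact_mod_cast l1
    have l4 : -1 < m' - m := by exact_mod_cast l2
    have : m' - m = 0 := by omega
    rw [this, Int.cast_zero] at e
    linarith
  refine ⟨(nearT z w + nearT z' w) / 2, by positivity, fun x ⟨h1, h2⟩ => ?_⟩
  have h3 := hw (per_mem_box x)
  have h4 : nearT z x + nearT z' x = _ := hp.eq_fract x
  simp only [Set.mem_ofPred_eq] at h3
  linarith

/-! ### The test function -/

lemma leadE_ge {d : ℕ} (G : (Fin d → ℝ) → ℝ) (x : Fin d → ℝ) :
    ∑ _i : Fin d, (2 : ℝ) ≤ leadE G x :=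
  Finset.sum_le_sum fun i _ => by linarith [Real.one_le_cosh (pd G i x / 2)]

lemma leadE_of_pd {d : ℕ} {G : (Fin d → ℝ) → ℝ} {x : Fin d → ℝ} (h : ∀ i, pd G i x = 0) :
    leadE G x = ∑ _i : Fin d, (2 : ℝ) := by
  simp [leadE, h]

lemma pd_eq_zero {d : ℕ} {G : (Fin d → ℝ) → ℝ} {x : Fin d → ℝ} (h : fderiv ℝ G x = 0)
    (i : Fin d) : pd G i x = 0 := by
  simp [pd, h]

lemma leadE_gt {d : ℕ} {G : (Fin d → ℝ) → ℝ} {x : Fin d → ℝ} (h : fderiv ℝ G x ≠ 0) :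
    ∑ _i : Fin d, (2 : ℝ) < leadE G x := by
  have : ∃ i, pd G i x ≠ 0 := by
    by_contra! hc
    refine h ?_
    ext y
    rw [pi_eq_sum_univ' y, map_sum]
    exact Finset.sum_eq_zero fun i _ => by
      rw [map_smul, show fderiv ℝ G x (Pi.single i 1) = 0 from hc i, smul_zero]
  obtain ⟨i, hi⟩ := this
  refine Finset.sum_lt_sum (fun i _ => by linarith [Real.one_le_cosh (pd G i x / 2)])
    ⟨i, Finset.mem_univ i, ?_⟩
  have := Real.one_lt_cosh.2 (show pd G i x / 2 ≠ 0 from div_ne_zero hi two_ne_zero)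
  linarith

/-- A test function localized near one critical point `z`: its leading term is dominated by
that of `F`, and the trace of its Hessian at `z` is almost `∑ᵢ |λᵢ|`, the `λᵢ` being the
eigenvalues of the Hessian of `F`. -/
lemma exists_bump {d : ℕ} {F : (Fin d → ℝ) → ℝ} (hF : PerT d F) (hFC : ContDiff ℝ 2 F)
    {z : Fin d → ℝ} (hz : fderiv ℝ F z = 0) (hH : (HessT d F z).IsHermitian)
    (hne : ∀ i, hH.eigenvalues i ≠ 0) {ε : ℝ} (hε : 0 < ε) :
    ∃ ρ₀ > 0, ∀ ρ, 0 < ρ → ρ ≤ ρ₀ → ∃ ψ : (Fin d → ℝ) → ℝ, ContDiff ℝ 2 ψ ∧ PerT d ψ ∧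
      (∀ x, ρ ≤ nearT z x → ∀ i, pd ψ i x = 0) ∧ (∀ x, leadE ψ x ≤ leadE F x) ∧
      (∀ x, fderiv ℝ F x ≠ 0 → leadE ψ x < leadE F x) ∧ (∀ i, pd ψ i z = 0) ∧
      ∑ i, |hH.eigenvalues i| - ε ≤ ∑ i, pdd ψ i z := by
  obtain ⟨P, hPs, hPnn, hPtr, hPsq, c, hc, hcH⟩ := exists_abs_matrix hH hne
  set S := ∑ i, |hH.eigenvalues i| with hS
  have hS0 : 0 ≤ S := Finset.sum_nonneg fun i _ => abs_nonneg _
  set δ := min 1 (ε / (S + 1)) with hδ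
  have hδ0 : 0 < δ := lt_min one_pos (by positivity)
  have hδ1 : δ ≤ 1 := min_le_left _ _
  have hδS : δ * S ≤ ε := by
    calc δ * S ≤ ε / (S + 1) * (S + 1) := by
          gcongr
          · exact min_le_right _ _
          · linarith
      _ = ε := div_mul_cancel₀ _ (by positivity)
  have hθ : 0 ≤ 1 - δ := by linarith
  have hu : ∀ j, HasFDerivAt (pd F j) (fderiv ℝ (pd F j) z) z := fun j =>
    ((contDiff_pd hFC j).differentiable one_ne_zero z).hasFDerivAt
  have ha : ∀ j (y : Fin d → ℝ), fderiv ℝ (pd F j) z y = ∑ k, HessT d F z j k * y k := by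
    intro j y
    have e1 : ∀ k, HessT d F z j k = fderiv ℝ (pd F j) z (Pi.single k 1) := fun k => by
      have h1 : HessT d F z k j = fderiv ℝ (pd F j) z (Pi.single k 1) := rfl
      rw [← h1]
      simpa using (hH.apply j k).symm
    conv_lhs => rw [pi_eq_sum_univ' y]
    rw [map_sum]
    refine Finset.sum_congr rfl fun k _ => ?_
    rw [e1, map_smul, smul_eq_mul, mul_comm]
  have hb : ∀ j (y : Fin d → ℝ), (∑ k, ((1 - δ) * P j k) •
      (ContinuousLinearMap.proj k : (Fin d → ℝ) →L[ℝ] ℝ)) y = (1 - δ) * ∑ k, P j k * y k := by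
    intro j y
    simp [Finset.mul_sum, mul_assoc]
  -- `|P y| = |H y|`, so the factor `1 - δ` makes the gradient of the profile strictly smaller
  -- than that of `F` near `z`
  have hcmp := cosh_compare hu (fun j => hasFDerivAt_gradT z P (1 - δ) j)
    (pd_eq_zero hz) (gradT_self z P (1 - δ)) hδ0 hδ1 hc
    (fun y => by
      simp only [ha, hb, mul_pow, ← Finset.mul_sum, hPsq]
      have : (1 - δ) ^ 2 ≤ 1 - δ := by nlinarith
      exact mul_le_mul_of_nonneg_right this (Finset.sum_nonneg fun _ _ => sq_nonneg _))
    (fun y => by simpa only [ha] using hcH y)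
  obtain ⟨η, hη, hball⟩ := Metric.eventually_nhds_iff.1 hcmp
  obtain ⟨ρ₀, hρ₀, hnear⟩ := nearT_lt z hη
  refine ⟨ρ₀, hρ₀, fun ρ hρ hρle => ?_⟩
  have hρ2 : 0 < ρ ^ 2 := by positivity
  have hprof : ∀ x, nearT z x ^ 2 ≤ profT z P (1 - δ) x := fun x => by
    have := mul_nonneg (by positivity : 0 ≤ (1 - δ) / 2) (hPnn fun j => sT z j x)
    unfold profT
    linarith
  have hprof0 : ∀ x, 0 ≤ profT z P (1 - δ) x := fun x => (sq_nonneg _).trans (hprof x)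
  set ψ : (Fin d → ℝ) → ℝ := fun x => capT (ρ ^ 2) (profT z P (1 - δ) x) with hψ
  have hpd : ∀ i, pd ψ i = fun x => capT' (ρ ^ 2) (profT z P (1 - δ) x) *
      gradT z P (1 - δ) i x := by
    intro i
    funext x
    have h1 := (hasDerivAt_capT hρ2 (profT z P (1 - δ) x)).comp_hasFDerivAt x
      (hasFDerivAt_profT z hPs (1 - δ) x)
    have h2 : fderiv ℝ ψ x = _ := h1.fderiv
    rw [← pd_profT z hPs, pd, pd, h2, (hasFDerivAt_profT z hPs (1 - δ) x).fderiv]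
    rfl
  have hψper : PerT d ψ := fun x v => by simp only [hψ, per_profT z P (1 - δ) x v]
  have hfar : ∀ x, ρ ≤ nearT z x → ∀ i, pd ψ i x = 0 := by
    intro x hx i
    rw [hpd]
    have : ρ ^ 2 ≤ profT z P (1 - δ) x := le_trans (by gcongr) (hprof x)
    simp only [capT'_of_le hρ2 this, zero_mul]
  -- the truncation only shrinks the gradient, since `0 ≤ capT' ≤ 1`
  have hgrad : ∀ x, leadE ψ x ≤ ∑ j, 2 * Real.cosh (gradT z P (1 - δ) j x / 2) := by
    intro x
    refine Finset.sum_le_sum fun j _ => ?_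
    refine mul_le_mul_of_nonneg_left (Real.cosh_le_cosh.2 ?_) zero_le_two
    obtain ⟨c0, c1⟩ := capT'_mem hρ2 (hprof0 x)
    rw [hpd, abs_div, abs_div, abs_mul, abs_of_nonneg c0]
    gcongr
    exact mul_le_of_le_one_left (abs_nonneg _) c1
  have hclose : ∀ x, nearT z x < ρ → leadE ψ x ≤ leadE F x ∧
      (fderiv ℝ F x ≠ 0 → leadE ψ x < leadE F x) := by
    intro x hx
    obtain ⟨v, hv⟩ := hnear x (hx.trans_le hρle)
    obtain ⟨h1, h2⟩ := hball hv
    rw [← hψper.leadE x v, ← hF.leadE x v, ← hF.fderiv x v]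
    exact ⟨(hgrad _).trans h1, fun hne => (hgrad _).trans_lt (h2 fun h => hne (h ▸ hz))⟩
  have hpdz : ∀ i, pd ψ i z = 0 := fun i => by simp [hpd, gradT_self]
  refine ⟨ψ, (contDiff_capT _).comp (contDiff_profT z P (1 - δ)), hψper, hfar, fun x => ?_,
    fun x hx => ?_, hpdz, ?_⟩
  · rcases lt_or_ge (nearT z x) ρ with h | h
    · exact (hclose x h).1
    · rw [leadE_of_pd (hfar x h)]
      exact leadE_ge F x
  · rcases lt_or_ge (nearT z x) ρ with h | h
    · exact (hclose x h).2 hx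
    · rw [leadE_of_pd (hfar x h)]
      exact leadE_gt hx
  · have hpdd : ∀ i, pdd ψ i z = (1 - δ) * P i i := by
      intro i
      have h1 : HasFDerivAt (fun x => capT' (ρ ^ 2) (profT z P (1 - δ) x)) _ z :=
        (((differentiable_capT' (ρ ^ 2)).comp
          ((contDiff_profT z P (1 - δ)).differentiable two_ne_zero)) z).hasFDerivAt
      have h2 := (h1.mul (hasFDerivAt_gradT z P (1 - δ) i)).fderiv
      have h3 : pdd ψ i z = fderiv ℝ (pd ψ i) z (Pi.single i 1) := rfl
      rw [h3, hpd]
      refine (DFunLike.congr_fun h2 _).trans ?_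
      simp [profT_self, capT'_zero, gradT_self, Pi.single_apply]
    simp only [hpdd]
    rw [← Finset.mul_sum, hPtr]
    linarith

/-- Summing the localized test functions over the critical points of a period cell. -/
lemma exists_test {d : ℕ} {F : (Fin d → ℝ) → ℝ} (hF : PerT d F) (hFC : ContDiff ℝ 2 F)
    (hfin : {x : Fin d → ℝ | (∀ i, x i ∈ Set.Ico (0 : ℝ) 1) ∧ fderiv ℝ F x = 0}.Finite)
    (ξ : (Fin d → ℝ) → Fin d → ℝ)
    (hξ : ∀ z : Fin d → ℝ, fderiv ℝ F z = 0 →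
      ∃ (hH : (HessT d F z).IsHermitian) (σ : Equiv.Perm (Fin d)),
        ∀ i, ξ z i = hH.eigenvalues (σ i))
    (hnd : ∀ z : Fin d → ℝ, fderiv ℝ F z = 0 → ∀ i, ξ z i ≠ 0) {ε : ℝ} (hε : 0 < ε) :
    ∃ ψ : (Fin d → ℝ) → ℝ, ContDiff ℝ 2 ψ ∧ PerT d ψ ∧ (∀ x, leadE ψ x ≤ leadE F x) ∧
      (∀ x, fderiv ℝ F x ≠ 0 → leadE ψ x < leadE F x) ∧
      ∀ z, (∀ i, z i ∈ Set.Ico (0 : ℝ) 1) → fderiv ℝ F z = 0 →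
        ∑ i, max (-(ξ z i)) 0 - ε ≤ corrE ψ z - corrE F z := by
  set A := hfin.toFinset with hA
  have hmem : ∀ z, z ∈ A ↔ (∀ i, z i ∈ Set.Ico (0 : ℝ) 1) ∧ fderiv ℝ F z = 0 := fun z => by
    simp [hA]
  have hbump : ∀ z ∈ A, ∃ ρ₀ > 0, ∀ ρ, 0 < ρ → ρ ≤ ρ₀ → ∃ ψ : (Fin d → ℝ) → ℝ,
      ContDiff ℝ 2 ψ ∧ PerT d ψ ∧
      (∀ x, ρ ≤ nearT z x → ∀ i, pd ψ i x = 0) ∧ (∀ x, leadE ψ x ≤ leadE F x) ∧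
      (∀ x, fderiv ℝ F x ≠ 0 → leadE ψ x < leadE F x) ∧ (∀ i, pd ψ i z = 0) ∧
      ∑ i, |ξ z i| - 2 * ε ≤ ∑ i, pdd ψ i z := by
    intro z hz
    have hz0 := ((hmem z).1 hz).2
    obtain ⟨hH, σ, hσ⟩ := hξ z hz0
    have e : ∑ i, |ξ z i| = ∑ i, |hH.eigenvalues i| := by
      simp only [hσ]
      exact Equiv.sum_comp σ fun i => |hH.eigenvalues i|
    rw [e]
    refine exists_bump hF hFC hz0 hH (fun i => ?_) (by positivity)
    have := hnd z hz0 (σ.symm i)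
    rwa [hσ, Equiv.apply_symm_apply] at this
  have hpos : ∀ᶠ ρ : ℝ in nhdsWithin 0 (Set.Ioi 0), 0 < ρ := self_mem_nhdsWithin
  have hsmall : ∀ r > (0 : ℝ), ∀ᶠ ρ : ℝ in nhdsWithin 0 (Set.Ioi 0), ρ ≤ r := fun r hr =>
    nhdsWithin_le_nhds (eventually_le_nhds hr)
  have hev1 : ∀ᶠ ρ : ℝ in nhdsWithin 0 (Set.Ioi 0), ∀ z ∈ A, ∃ ψ : (Fin d → ℝ) → ℝ,
      ContDiff ℝ 2 ψ ∧ PerT d ψ ∧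
      (∀ x, ρ ≤ nearT z x → ∀ i, pd ψ i x = 0) ∧ (∀ x, leadE ψ x ≤ leadE F x) ∧
      (∀ x, fderiv ℝ F x ≠ 0 → leadE ψ x < leadE F x) ∧ (∀ i, pd ψ i z = 0) ∧
      ∑ i, |ξ z i| - 2 * ε ≤ ∑ i, pdd ψ i z := by
    rw [Filter.eventually_all_finset]
    intro z hz
    obtain ⟨ρ₀, hρ₀, h⟩ := hbump z hz
    filter_upwards [hpos, hsmall ρ₀ hρ₀] with ρ h1 h2 using h ρ h1 h2
  have hev2 : ∀ᶠ ρ : ℝ in nhdsWithin 0 (Set.Ioi 0), ∀ z ∈ A, ∀ z' ∈ A, z ≠ z' → ∀ x,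
      ¬ (nearT z x < ρ ∧ nearT z' x < ρ) := by
    rw [Filter.eventually_all_finset]
    intro z hz
    rw [Filter.eventually_all_finset]
    intro z' hz'
    by_cases hne : z = z'
    · exact Eventually.of_forall fun ρ h => absurd hne h
    · obtain ⟨ρ₀, hρ₀, h⟩ := nearT_separated ((hmem z).1 hz).1 ((hmem z').1 hz').1 hne
      filter_upwards [hsmall ρ₀ hρ₀] with ρ h1 _ x hx
      exact h x ⟨hx.1.trans_le h1, hx.2.trans_le h1⟩
  obtain ⟨ρ, hρ, h1, hsep⟩ := (hpos.and (hev1.and hev2)).exists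
  choose! Ψ hΨC hΨper hΨfar hΨle hΨlt hΨpd hΨtr using h1
  have hψpd : ∀ i, pd (fun x => ∑ z ∈ A, Ψ z x) i = fun x => ∑ z ∈ A, pd (Ψ z) i x := by
    intro i
    funext x
    unfold pd
    rw [fderiv_fun_sum fun z hz => (hΨC z hz).differentiable two_ne_zero x]
    simp
  have hψpdd : ∀ i x, pdd (fun x => ∑ z ∈ A, Ψ z x) i x = ∑ z ∈ A, pdd (Ψ z) i x := by
    intro i x
    have h3 : pdd (fun x => ∑ z ∈ A, Ψ z x) i x
        = fderiv ℝ (pd (fun x => ∑ z ∈ A, Ψ z x) i) x (Pi.single i 1) := rfl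
    rw [h3, hψpd, fderiv_fun_sum fun z hz =>
      (contDiff_pd (hΨC z hz) i).differentiable one_ne_zero x]
    simp only [_root_.sum_apply]
    rfl
  -- at most one of the summands contributes to the gradient at a given point
  have hcases : ∀ x, (∃ z ∈ A, leadE (fun x => ∑ z ∈ A, Ψ z x) x = leadE (Ψ z) x) ∨
      leadE (fun x => ∑ z ∈ A, Ψ z x) x = ∑ _i : Fin d, (2 : ℝ) := by
    intro x
    by_cases h : ∃ z ∈ A, nearT z x < ρ
    · obtain ⟨z, hz, hzx⟩ := h
      refine Or.inl ⟨z, hz, ?_⟩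
      have : ∀ i, pd (fun x => ∑ z ∈ A, Ψ z x) i x = pd (Ψ z) i x := fun i => by
        rw [hψpd]
        refine Finset.sum_eq_single_of_mem z hz fun z' hz' hne => hΨfar z' hz' x ?_ i
        exact not_lt.1 fun h => hsep z' hz' z hz hne x ⟨h, hzx⟩
      simp only [leadE, this]
    · push Not at h
      refine Or.inr (leadE_of_pd fun i => ?_)
      rw [hψpd]
      exact Finset.sum_eq_zero fun z hz => hΨfar z hz x (h z hz) i
  refine ⟨fun x => ∑ z ∈ A, Ψ z x, ContDiff.sum fun z hz => hΨC z hz, fun x v =>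
    Finset.sum_congr rfl fun z hz => hΨper z hz x v, fun x => ?_, fun x hx => ?_,
    fun z hz hz0 => ?_⟩
  · rcases hcases x with ⟨z, hz, h⟩ | h
    · rw [h]
      exact hΨle z hz x
    · rw [h]
      exact leadE_ge F x
  · rcases hcases x with ⟨z, hz, h⟩ | h
    · rw [h]
      exact hΨlt z hz x hx
    · rw [h]
      exact leadE_gt hx
  · have hzA : z ∈ A := (hmem z).2 ⟨hz, hz0⟩
    have hfar : ∀ z' ∈ A, z' ≠ z → ∀ᶠ x in nhds z, ∀ i, pd (Ψ z') i x = 0 := by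
      intro z' hz' hne
      have : ∀ᶠ x in nhds z, nearT z x < ρ :=
        (contDiff_nearT z).continuous.continuousAt.eventually_lt_const (by rwa [nearT_self])
      filter_upwards [this] with x hx
      exact hΨfar z' hz' x (not_lt.1 fun h => hsep z' hz' z hzA hne x ⟨h, hx⟩)
    have hpd0 : ∀ i, pd (fun x => ∑ z ∈ A, Ψ z x) i z = 0 := fun i => by
      rw [hψpd]
      refine Finset.sum_eq_zero fun z' hz' => ?_
      by_cases hne : z' = z
      · rw [hne]
        exact hΨpd z hzA i
      · exact (hfar z' hz' hne).self_of_nhds i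
    have hpdd0 : ∀ i, pdd (fun x => ∑ z ∈ A, Ψ z x) i z = pdd (Ψ z) i z := fun i => by
      rw [hψpdd]
      refine Finset.sum_eq_single_of_mem z hzA fun z' hz' hne => ?_
      have h3 : pdd (Ψ z') i z = fderiv ℝ (pd (Ψ z') i) z (Pi.single i 1) := rfl
      have h4 : pd (Ψ z') i =ᶠ[nhds z] fun _ => 0 := by
        filter_upwards [hfar z' hz' hne] with x hx using hx i
      rw [h3, h4.fderiv_eq]
      simp
    obtain ⟨hH, σ, hσ⟩ := hξ z hz0
    have htr : ∑ i, pdd F i z = ∑ i, ξ z i := by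
      have t1 : ∑ i, pdd F i z = (HessT d F z).trace := rfl
      rw [t1, hH.trace_eq_sum_eigenvalues]
      simp only [hσ]
      exact (Equiv.sum_comp σ fun i => hH.eigenvalues i).symm
    -- `ζ = ½ ∑ (|ξᵢ| - ξᵢ)`, the difference of the two half-traces
    have hmax : ∀ t : ℝ, max (-t) 0 = (|t| - t) / 2 := fun t => by
      rcases le_total 0 t with h | h
      · rw [abs_of_nonneg h, max_eq_right (by linarith)]
        ring
      · rw [abs_of_nonpos h, max_eq_left (by linarith)]
        ring
    have hl := hΨtr z hzA
    simp only [corrE, hpd0, pd_eq_zero hz0, hpdd0, hmax, zero_div, Real.cosh_zero, mul_one,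
      ← Finset.sum_div, Finset.sum_sub_distrib, htr]
    linarith

/-- Γ-liminf for `n·ℐ_n`: if `μ_n → μ` weakly (on the torus), then
`liminf n·ℐ_n(μ_n) ≥ J⁰(μ) = ∫ ζ dμ`, where `ζ(x) = Σᵢ max{-ξᵢ(x),0}` at critical
points `x` (with `ξᵢ(x)` the eigenvalues of the Hessian) and `ζ = +∞` elsewhere. -/
theorem stmt13 (d : ℕ) (F : (Fin d → ℝ) → ℝ)
    (hFper : PerT d F)
    (hFC2 : ContDiff ℝ 2 F)
    (hFLip : ∃ L : NNReal, LipschitzWith L (iteratedFDeriv ℝ 2 F))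
    (hFfin : {x : Fin d → ℝ |
      (∀ i, x i ∈ Set.Ico (0 : ℝ) 1) ∧ fderiv ℝ F x = 0}.Finite)
    -- `ξ z` enumerates, with multiplicity, the eigenvalues of the Hessian of `F`
    -- at each critical point `z`:
    (ξ : (Fin d → ℝ) → Fin d → ℝ)
    (hξ : ∀ z : Fin d → ℝ, fderiv ℝ F z = 0 →
      ∃ (hH : (HessT d F z).IsHermitian) (σ : Equiv.Perm (Fin d)),
        ∀ i, ξ z i = hH.eigenvalues (σ i))
    -- the Hessian at critical points has only non-zero eigenvalues:
    (hnd : ∀ z : Fin d → ℝ, fderiv ℝ F z = 0 → ∀ i, ξ z i ≠ 0)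
    (μ : Measure (Fin d → ℝ)) (hμ : IsProbabilityMeasure μ)
    (hμsupp : μ (Set.univ.pi fun _ => Set.Ico (0 : ℝ) 1) = 1)
    (μn : ℕ → (Fin d → ℝ) → ℝ)
    (hμn : ∀ n, 0 < n →
      (∀ x ∈ XiT d n, 0 ≤ μn n x) ∧ ∑ x ∈ XiT d n, μn n x = 1)
    (hweak : ∀ g : (Fin d → ℝ) → ℝ, Continuous g → PerT d g →
      Tendsto (fun n => ∑ x ∈ XiT d n, μn n x * g x) atTop
        (nhds (∫ x, g x ∂μ))) :
    (∫⁻ x, (if fderiv ℝ F x = 0 then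
        ENNReal.ofReal (∑ i : Fin d, max (-(ξ x i)) 0) else ⊤) ∂μ) ≤
      liminf (fun n : ℕ => ENNReal.ofReal ((n : ℝ) * IT d F n (μn n))) atTop := by
  have := hμ
  exact main_of_test hFper hFC2 (fun x => ∑ i, max (-(ξ x i)) 0)
    (fun x => Finset.sum_nonneg fun i _ => le_max_right _ _)
    (fun ε hε => exists_test hFper hFC2 hFfin ξ hξ hnd hε) μ hμsupp μn hμn hweak

end
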